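/- arXiv:2210.09093 — 2 statements merged into one kernel-verified Lean document; each statement's English description precedes it below -/
import Mathlib

section
/- Let g(x₁,...,xₙ) be a real analytic function defined on a neighborhood of the origin in ℝⁿ, not identically zero. Then there exist η > 0 and an integer k ≥ 0 such that for each (x₁,...,x_{n−1}) in the (n−1)-dimensional open ball B_{n−1}(0,η), either g(x₁,...,x_{n−1},xₙ) = 0 for all |xₙ| < η, or there is an integer 0 ≤ l ≤ k (which may depend on (x₁,...,x_{n−1})) such that for all |xₙ| < η one has 0 < (1/2)|∂_{xₙ}^l g(x₁,...,x_{n−1},0)| < |∂_{xₙ}^l g(x₁,...,x_{n−1},xₙ)| < 2|∂_{xₙ}^l g(x₁,...,x_{n−1},0)|. Moreover, the set of (x₁,...,x_{n−1}) ∈ B_{n−1}(0,η) for which g(x₁,...,x_{n−1},xₙ) = 0 for all |xₙ| < η has (n−1)-dimensional Lebesgue measure zero. -/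
open Set MeasureTheory

/-! Expand `g (x, t) = ∑ bₗ(x) (t / δ) ^ l`, with `x ↦ b x` analytic into `ℓ¹`. Finitely many of
the coefficients control all of them near `x = 0`: by Weierstrass division and induction on the
dimension, `b x = ∑ bᵢ(x) cᵢ(x)` over finitely many `i`, with `cᵢ(x)` bounded. Hence for each `x`
some `l ≤ k` satisfies `‖b x‖ ≤ C ‖bₗ(x)‖`, with `k` and `C` independent of `x`. If `b x ≠ 0`, the
`l`-th derivative of `t ↦ g (x, t)` then varies by less than half of its value at `0`, on an
interval independent of `x`. The exceptional `x` are the zeros of the nonzero analytic map `b`,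
which form a null set. -/

open Filter
open scoped Topology ENNReal NNReal

/-- The Banach space `ℓ¹(ℕ; F)` of absolutely summable sequences, used as coefficient sequences of
power series in one variable. -/
abbrev SeqOne (F : Type*) [NormedAddCommGroup F] := lp (fun _ : ℕ => F) 1

namespace SeqOne

variable {𝕜 F G : Type*} [NontriviallyNormedField 𝕜] [NormedAddCommGroup F] [NormedSpace 𝕜 F]
  [NormedAddCommGroup G] [NormedSpace 𝕜 G]

section Coordinates

variable (𝕜)

/-- The inclusion `F → ℓ¹(ℕ; F)` of the `k`-th coordinate. -/
noncomputable def single (k : ℕ) : F →L[𝕜] SeqOne F :=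
  lp.singleContinuousLinearMap 𝕜 (fun _ : ℕ => F) 1 k

/-- The projection `ℓ¹(ℕ; F) → F` onto the `k`-th coordinate. -/
noncomputable def proj (k : ℕ) : SeqOne F →L[𝕜] F :=
  lp.evalCLM 𝕜 (fun _ : ℕ => F) 1 k

variable {𝕜}

lemma coe_single (k : ℕ) (v : F) : (single 𝕜 k v : ℕ → F) = Pi.single k v := by
  simp [single, lp.coeFn_single]

@[simp] lemma proj_apply (k : ℕ) (y : SeqOne F) : proj 𝕜 k y = y k := rfl

@[simp] lemma norm_single (k : ℕ) (v : F) : ‖single 𝕜 k v‖ = ‖v‖ := by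
  simp [single, lp.norm_single]

lemma opNorm_single_le (k : ℕ) : ‖(single 𝕜 k : F →L[𝕜] SeqOne F)‖ ≤ 1 :=
  ContinuousLinearMap.opNorm_le_bound _ zero_le_one fun v => by simp

lemma opNorm_proj_le (k : ℕ) : ‖(proj 𝕜 k : SeqOne F →L[𝕜] F)‖ ≤ 1 :=
  ContinuousLinearMap.opNorm_le_bound _ zero_le_one fun y =>
    (one_mul ‖y‖).symm ▸ lp.norm_apply_le_norm one_ne_zero y k

lemma ext_single {S T : SeqOne F →L[𝕜] G} (h : ∀ k v, S (single 𝕜 k v) = T (single 𝕜 k v)) :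
    S = T :=
  lp.ext_continuousLinearMap ENNReal.one_ne_top fun k => ContinuousLinearMap.ext fun v => h k v

end Coordinates

section Lift

lemma hasSum_norm (y : SeqOne F) : HasSum (fun k => ‖y k‖) ‖y‖ := by
  simpa using lp.hasSum_norm (p := 1) (by simp) y

variable [CompleteSpace G]

lemma summable_clm_apply {T : ℕ → F →L[𝕜] G} {C : ℝ} (hT : ∀ k, ‖T k‖ ≤ C) (y : SeqOne F) :
    Summable fun k => T k (y k) :=
  .of_norm_bounded ((hasSum_norm y).summable.mul_left C) fun k => (T k).le_of_opNorm_le (hT k) _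

/-- The universal property of `ℓ¹`: the continuous linear map `y ↦ ∑ₖ Tₖ yₖ` obtained from a bounded
family of continuous linear maps `Tₖ : F → G`. -/
noncomputable def lift (T : ℕ → F →L[𝕜] G) (C : ℝ) (hT : ∀ k, ‖T k‖ ≤ C) : SeqOne F →L[𝕜] G :=
  LinearMap.mkContinuous
    { toFun y := ∑' k, T k (y k)
      map_add' y z := by
        simpa only [lp.coeFn_add, Pi.add_apply, map_add] using
          (summable_clm_apply hT y).tsum_add (summable_clm_apply hT z)
      map_smul' c y := by
        simpa only [lp.coeFn_smul, Pi.smul_apply, map_smul, RingHom.id_apply] using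
          (summable_clm_apply hT y).tsum_const_smul c } C fun y =>
    tsum_of_norm_bounded ((hasSum_norm y).mul_left C) fun k => (T k).le_of_opNorm_le (hT k) _

@[simp] lemma lift_single (T : ℕ → F →L[𝕜] G) (C : ℝ) (hT : ∀ k, ‖T k‖ ≤ C) (k : ℕ) (v : F) :
    lift T C hT (single 𝕜 k v) = T k v := by
  refine (tsum_eq_single k fun j hj => ?_).trans ?_
  · rw [coe_single, Pi.single_eq_of_ne hj, map_zero]
  · rw [coe_single, Pi.single_eq_same]

lemma norm_lift_le (T : ℕ → F →L[𝕜] G) (C : ℝ) (hT : ∀ k, ‖T k‖ ≤ C) : ‖lift T C hT‖ ≤ C :=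
  LinearMap.mkContinuous_norm_le _ ((norm_nonneg _).trans (hT 0)) _

end Lift

section Operations

variable (𝕜)

/-- The terms of degree `< d` of a power series. -/
noncomputable def head (d : ℕ) : SeqOne F →L[𝕜] SeqOne F :=
  ∑ s : Fin d, (single 𝕜 s).comp (proj 𝕜 s)

variable [CompleteSpace F]

/-- Multiplication of a power series by the `k`-th power of the variable. -/
noncomputable def shift (k : ℕ) : SeqOne F →L[𝕜] SeqOne F :=
  lift (fun n => single 𝕜 (n + k)) 1 fun _ => opNorm_single_le _

/-- The quotient in the division of a power series by the `d`-th power of the variable. -/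
noncomputable def unshift (d : ℕ) : SeqOne F →L[𝕜] SeqOne F :=
  lift (fun n => if n < d then 0 else single 𝕜 (n - d)) 1 fun n => by
    split_ifs
    · simp
    · exact opNorm_single_le _

lemma shift_mul_unshift_add_head (d : ℕ) :
    shift 𝕜 d * unshift 𝕜 d + head 𝕜 d = (1 : SeqOne F →L[𝕜] SeqOne F) := by
  refine ext_single fun n v => ?_
  have hhead : head 𝕜 d (single 𝕜 n v) = if n < d then single 𝕜 n v else 0 := by
    simp only [head, sum_apply, ContinuousLinearMap.comp_apply, proj_apply, coe_single]
    split_ifs with h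
    · rw [Fintype.sum_eq_single ⟨n, h⟩ fun s hs => ?_, Pi.single_eq_same]
      rw [Pi.single_eq_of_ne fun h => hs (Fin.ext h), map_zero]
    · refine Finset.sum_eq_zero fun s _ => ?_
      rw [Pi.single_eq_of_ne (s.2.trans_le (not_lt.1 h)).ne, map_zero]
  by_cases h : n < d
  · simp [shift, unshift, hhead, h]
  · simp [shift, unshift, hhead, h, Nat.sub_add_cancel (not_lt.1 h)]

variable {𝕜}

/-- The Cauchy product of a scalar power series and an `F`-valued one. -/
noncomputable def mulOp : SeqOne 𝕜 →L[𝕜] SeqOne F →L[𝕜] SeqOne F :=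
  lift (fun k => (ContinuousLinearMap.id 𝕜 𝕜).smulRight (shift 𝕜 k)) 1 fun k => by
    rw [ContinuousLinearMap.norm_smulRight_apply]
    exact mul_le_one₀ ContinuousLinearMap.norm_id_le (norm_nonneg _) (norm_lift_le _ _ _)

lemma mulOp_single (k : ℕ) (c : 𝕜) :
    mulOp (single 𝕜 k c) = c • (shift 𝕜 k : SeqOne F →L[𝕜] _) := by
  simp [mulOp]

end Operations

section Evaluation

/-- The evaluation `y ↦ ∑ₖ yₖ (t / δ)ᵏ` of power series with coefficients `y` at `t`, where the
coefficients are measured in units of `δ`. It is meaningful for `‖t‖ < ‖δ‖` only: otherwise the sum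
of operators may diverge, and then it is `0`. -/
noncomputable def ev (δ t : 𝕜) : SeqOne F →L[𝕜] F := ∑' k, (t / δ) ^ k • proj 𝕜 k

/-- The power series of `ev δ` as a function with values in the space of operators. -/
noncomputable def evSeries (F : Type*) [NormedAddCommGroup F] [NormedSpace 𝕜 F] (δ : 𝕜) :
    FormalMultilinearSeries 𝕜 𝕜 (SeqOne F →L[𝕜] F) :=
  fun n => ContinuousMultilinearMap.mkPiRing 𝕜 (Fin n) ((δ ^ n)⁻¹ • proj 𝕜 n)

variable [CompleteSpace F] {δ t : 𝕜}

lemma hasFPowerSeriesOnBall_ev (hδ : δ ≠ 0) :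
    HasFPowerSeriesOnBall (ev δ) (evSeries F δ) 0 ‖δ‖₊ := by
  have hδ' : 0 < ‖δ‖₊ := by simpa [pos_iff_ne_zero] using hδ
  have hradius : ‖δ‖₊ ≤ (evSeries F δ).radius := by
    refine (evSeries F δ).le_radius_of_bound 1 fun n => ?_
    rw [evSeries, ContinuousMultilinearMap.norm_mkPiRing, norm_smul, norm_inv, norm_pow,
      coe_nnnorm, mul_right_comm, inv_mul_cancel₀ (by positivity), one_mul]
    exact opNorm_proj_le n
  convert ((evSeries F δ).hasFPowerSeriesOnBall
    (lt_of_lt_of_le (by exact_mod_cast hδ') hradius)).mono (by exact_mod_cast hδ') hradius using 1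
  ext1 t
  simp [ev, FormalMultilinearSeries.sum, evSeries, smul_smul, mul_pow, div_eq_mul_inv]

lemma ne_zero_of_norm_lt (ht : ‖t‖ < ‖δ‖) : δ ≠ 0 :=
  norm_pos_iff.1 ((norm_nonneg t).trans_lt ht)

lemma analyticAt_ev (ht : ‖t‖ < ‖δ‖) : AnalyticAt 𝕜 (ev δ : 𝕜 → SeqOne F →L[𝕜] F) t :=
  (hasFPowerSeriesOnBall_ev (ne_zero_of_norm_lt ht)).analyticAt_of_mem (by
    simpa [Metric.eball_coe] using ht)

lemma hasSum_ev (ht : ‖t‖ < ‖δ‖) (y : SeqOne F) :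
    HasSum (fun k => (t / δ) ^ k • y k) (ev δ t y) := by
  have h := (hasFPowerSeriesOnBall_ev (F := F) (ne_zero_of_norm_lt ht)).hasSum (y := t)
    (by simpa [Metric.eball_coe] using ht)
  simpa [evSeries, smul_smul, mul_pow, div_eq_mul_inv] using
    h.mapL (ContinuousLinearMap.apply 𝕜 F y)

lemma ev_single (ht : ‖t‖ < ‖δ‖) (k : ℕ) (v : F) : ev δ t (single 𝕜 k v) = (t / δ) ^ k • v := by
  refine (hasSum_ev ht _).unique ?_
  convert hasSum_single k (f := fun j => (t / δ) ^ j • (single 𝕜 k v : SeqOne F) j)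
    fun j hj => ?_ using 1
  · rw [coe_single, Pi.single_eq_same]
  · rw [coe_single, Pi.single_eq_of_ne hj, smul_zero]

lemma ev_shift (ht : ‖t‖ < ‖δ‖) (k : ℕ) (y : SeqOne F) :
    ev δ t (shift 𝕜 k y) = (t / δ) ^ k • ev δ t y := by
  have : (ev δ t).comp (shift 𝕜 k) = (t / δ) ^ k • (ev δ t : SeqOne F →L[𝕜] F) :=
    ext_single fun n v => by simp [shift, ev_single ht, smul_smul, pow_add, mul_comm]
  exact congr($this y)

lemma ev_mulOp [CompleteSpace 𝕜] (ht : ‖t‖ < ‖δ‖) (c : SeqOne 𝕜) (y : SeqOne F) :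
    ev δ t (mulOp c y) = ev δ t c • ev δ t y := by
  have : (ev δ t).comp (mulOp.flip y) = (ev δ t : SeqOne 𝕜 →L[𝕜] 𝕜).smulRight (ev δ t y) :=
    ext_single fun n v => by
      simp [mulOp_single, ev_single ht, smul_smul, ev_shift ht, mul_comm]
  exact congr($this c)

lemma ev_head (ht : ‖t‖ < ‖δ‖) (d : ℕ) (y : SeqOne F) :
    ev δ t (head 𝕜 d y) = ∑ s : Fin d, (t / δ) ^ (s : ℕ) • y s := by
  simp [head, ev_single ht]

open scoped Nat in
lemma iteratedDeriv_ev_zero (hδ : δ ≠ 0) (l : ℕ) :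
    iteratedDeriv l (ev δ : 𝕜 → SeqOne F →L[𝕜] F) 0 = (l ! / δ ^ l : 𝕜) • proj 𝕜 l := by
  rw [iteratedDeriv_eq_iteratedFDeriv,
    ← (hasFPowerSeriesOnBall_ev (F := F) hδ).factorial_smul (1 : 𝕜) l]
  simp [evSeries, ← Nat.cast_smul_eq_nsmul 𝕜, smul_smul, div_eq_mul_inv]

lemma iteratedDeriv_ev_apply (ht : ‖t‖ < ‖δ‖) (l : ℕ) (y : SeqOne F) :
    iteratedDeriv l (fun s => ev δ s y) t = iteratedDeriv l (ev δ) t y := by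
  have h := (ContinuousLinearMap.apply 𝕜 F y).iteratedFDeriv_comp_left
    ((analyticAt_ev (F := F) ht).contDiffAt (n := l)) (i := l) le_rfl
  rw [iteratedDeriv_eq_iteratedFDeriv, iteratedDeriv_eq_iteratedFDeriv]
  exact congr($h fun _ => 1)

lemma eq_of_eventually_ev_eq (hδ : δ ≠ 0) {y z : SeqOne F}
    (h : ∀ᶠ t in 𝓝 0, ev δ t y = ev δ t z) : y = z := by
  have hseries (y : SeqOne F) := (ContinuousLinearMap.apply 𝕜 F y).comp_hasFPowerSeriesOnBall
    (hasFPowerSeriesOnBall_ev hδ)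
  have heq := (hseries y).hasFPowerSeriesAt.eq_formalMultilinearSeries_of_eventually
    (hseries z).hasFPowerSeriesAt h
  refine lp.ext (funext fun l => ?_)
  simpa [evSeries, hδ] using congr($heq l fun _ => 1)

end Evaluation

end SeqOne

section Series

variable {𝕜 E F ι : Type*} [NontriviallyNormedField 𝕜] [NormedAddCommGroup E] [NormedSpace 𝕜 E]
  [NormedAddCommGroup F] [NormedSpace 𝕜 F] [CompleteSpace F]
  {f : ι → E → F} {q : ι → FormalMultilinearSeries 𝕜 E F} {x : E} {r : ℝ≥0}

lemma summable_apply_of_summable_norm_mul_pow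
    (hq : Summable fun il : ι × ℕ => ‖q il.1 il.2‖ * (r : ℝ) ^ il.2) {y : E} (hy : ‖y‖ ≤ r) :
    Summable fun il : ι × ℕ => q il.1 il.2 fun _ => y := by
  refine .of_norm_bounded hq fun il => ?_
  simpa using (q il.1 il.2).le_opNorm_mul_prod_of_le fun _ => hy

lemma hasSum_of_hasFPowerSeriesOnBall (hf : ∀ i, HasFPowerSeriesOnBall (f i) (q i) x r)
    (hq : Summable fun il : ι × ℕ => ‖q il.1 il.2‖ * (r : ℝ) ^ il.2) {y : E} (hy : ‖y‖ < r) :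
    HasSum (fun i => f i (x + y)) (∑' il : ι × ℕ, q il.1 il.2 fun _ => y) :=
  (summable_apply_of_summable_norm_mul_pow hq hy.le).hasSum.prod_fiberwise fun i =>
    (hf i).hasSum (by simpa [Metric.eball_coe] using hy)

lemma hasFPowerSeriesOnBall_tsum (hr : 0 < r) (hf : ∀ i, HasFPowerSeriesOnBall (f i) (q i) x r)
    (hq : Summable fun il : ι × ℕ => ‖q il.1 il.2‖ * (r : ℝ) ^ il.2) :
    HasFPowerSeriesOnBall (fun y => ∑' i, f i y) (fun l => ∑' i, q i l) x r := by
  have hswap : Summable fun li : ℕ × ι => ‖q li.2 li.1‖ * (r : ℝ) ^ li.1 := hq.prod_symm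
  have hcol (l : ℕ) : Summable fun i => ‖q i l‖ :=
    (summable_mul_right_iff (pow_ne_zero l (NNReal.coe_ne_zero.2 hr.ne'))).1 (hswap.prod_factor l)
  refine ⟨FormalMultilinearSeries.le_radius_of_summable _ ?_, by exact_mod_cast hr,
    fun {y} hy => ?_⟩
  · refine .of_nonneg_of_le (fun l => by positivity) (fun l => ?_) hswap.prod
    calc ‖∑' i, q i l‖ * (r : ℝ) ^ l ≤ (∑' i, ‖q i l‖) * r ^ l := by
          gcongr; exact norm_tsum_le_tsum_norm (hcol l)
      _ = ∑' i, ‖q i l‖ * r ^ l := tsum_mul_right.symm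
  · have hy' : ‖y‖ < r := by simpa [Metric.eball_coe] using hy
    rw [(hasSum_of_hasFPowerSeriesOnBall hf hq hy').tsum_eq]
    exact ((Equiv.prodComm ℕ ι).hasSum_iff.2
      (summable_apply_of_summable_norm_mul_pow hq hy'.le).hasSum).prod_fiberwise
        fun l => ContinuousMultilinearMap.hasSum_eval (hcol l).of_norm.hasSum _

end Series

section LineExpansion

variable {𝕜 E F : Type*} [NontriviallyNormedField 𝕜] [NormedAddCommGroup E] [NormedSpace 𝕜 E]
  [NormedAddCommGroup F] [NormedSpace 𝕜 F]

open SeqOne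

lemma summable_norm_changeOriginSeries_mul_pow_mul_pow (p : FormalMultilinearSeries 𝕜 E F)
    {r r' : ℝ≥0} (h : (r + r' : ℝ≥0∞) < p.radius) :
    Summable fun kl : ℕ × ℕ =>
      ‖p.changeOriginSeries kl.1 kl.2‖ * (r : ℝ) ^ kl.2 * (r' : ℝ) ^ kl.1 := by
  suffices Summable fun kl : ℕ × ℕ =>
      ‖p.changeOriginSeries kl.1 kl.2‖₊ * r ^ kl.2 * r' ^ kl.1 from NNReal.summable_coe.2 this
  have hsum := (NNReal.summable_sigma.1 ((Equiv.sigmaAssoc fun k l : ℕ =>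
    { s : Finset (Fin (k + l)) // s.card = l }).summable_iff.2
      (p.changeOriginSeries_summable_aux₁ h))).2
  refine NNReal.summable_of_le (fun kl => ?_) ((Equiv.sigmaEquivProd ℕ ℕ).symm.summable_iff.2 hsum)
  simp only [Function.comp_def, Equiv.sigmaAssoc, Equiv.coe_fn_mk, NNReal.tsum_mul_right]
  gcongr ?_ * _ * _
  exact p.nnnorm_changeOriginSeries_le_tsum _ _

/-- The operator turning the `k`-th term of a power series at a point `x` into the `k`-th entry of
the coefficient sequence of its restriction to the line through `x` in direction `v`. -/
noncomputable def lineCoeff (F : Type*) [NormedAddCommGroup F] [NormedSpace 𝕜 F] (v : E) (k : ℕ) :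
    (E [×k]→L[𝕜] F) →L[𝕜] SeqOne F :=
  (single 𝕜 k).comp (ContinuousMultilinearMap.apply 𝕜 (fun _ : Fin k => E) F fun _ => v)

lemma lineCoeff_apply (v : E) (k : ℕ) (q : E [×k]→L[𝕜] F) :
    lineCoeff F v k q = single 𝕜 k (q fun _ => v) := rfl

lemma norm_lineCoeff_le {v : E} {r : ℝ} (hv : ‖v‖ ≤ r) (k : ℕ) :
    ‖(lineCoeff F v k : (E [×k]→L[𝕜] F) →L[𝕜] SeqOne F)‖ ≤ r ^ k := by
  have hr : 0 ≤ r := (norm_nonneg v).trans hv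
  refine ContinuousLinearMap.opNorm_le_bound _ (by positivity) fun q => ?_
  rw [lineCoeff_apply, norm_single, mul_comm]
  simpa using q.le_opNorm_mul_prod_of_le fun _ => hv

lemma ev_lineCoeff [CompleteSpace F] {δ t : 𝕜} (ht : ‖t‖ < ‖δ‖) (w : E) {k : ℕ}
    (q : E [×k]→L[𝕜] F) : ev δ t (lineCoeff F (δ • w) k q) = q fun _ => t • w := by
  have hδ : δ ≠ 0 := ne_zero_of_norm_lt ht
  rw [lineCoeff_apply, ev_single ht, q.map_smul_univ (fun _ => δ) fun _ => w,
    q.map_smul_univ (fun _ => t) fun _ => w]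
  simp [smul_smul, ← mul_pow, hδ]

variable [CompleteSpace F] {a : E → F}

lemma exists_line_expansion {p : FormalMultilinearSeries 𝕜 E F} {R : ℝ≥0∞} {r : ℝ≥0} (hr : 0 < r)
    (hp : HasFPowerSeriesOnBall a p 0 R) (hrR : (r + r : ℝ≥0∞) < R) {δ : 𝕜} {w : E}
    (hw : ‖δ • w‖ ≤ r) :
    ∃ b : E → SeqOne F, AnalyticAt 𝕜 b 0 ∧
      ∀ x, ‖x‖ < r → ∀ t, ‖t‖ < ‖δ‖ → a (x + t • w) = ev δ t (b x) := by
  have hp0 : 0 < p.radius := hp.r_pos.trans_le hp.r_le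
  have hrp : (r : ℝ≥0∞) < R := (le_add_right le_rfl).trans_lt hrR
  let f (k : ℕ) : E → SeqOne F := lineCoeff F (δ • w) k ∘ fun x => p.changeOrigin x k
  let q (k : ℕ) : FormalMultilinearSeries 𝕜 E (SeqOne F) :=
    (lineCoeff F (δ • w) k).compFormalMultilinearSeries (p.changeOriginSeries k)
  have hf (k : ℕ) : HasFPowerSeriesOnBall (f k) (q k) 0 r :=
    ((lineCoeff F (δ • w) k).comp_hasFPowerSeriesOnBall
      (p.hasFPowerSeriesOnBall_changeOrigin k hp0)).mono (by exact_mod_cast hr)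
      (hrp.le.trans hp.r_le)
  have hq : Summable fun kl : ℕ × ℕ => ‖q kl.1 kl.2‖ * (r : ℝ) ^ kl.2 := by
    refine .of_nonneg_of_le (fun kl => by positivity) (fun kl => ?_)
      (summable_norm_changeOriginSeries_mul_pow_mul_pow p (hrR.trans_le hp.r_le))
    calc ‖q kl.1 kl.2‖ * (r : ℝ) ^ kl.2
        ≤ ((r : ℝ) ^ kl.1 * ‖p.changeOriginSeries kl.1 kl.2‖) * (r : ℝ) ^ kl.2 := by
          gcongr
          refine (ContinuousLinearMap.norm_compContinuousMultilinearMap_le _ _).trans ?_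
          gcongr
          exact norm_lineCoeff_le hw _
      _ = _ := by ring
  refine ⟨_, (hasFPowerSeriesOnBall_tsum hr hf hq).analyticAt, fun x hx t ht => ?_⟩
  have hxr : (‖x‖₊ : ℝ≥0∞) < r := by exact_mod_cast hx
  have hb : HasSum (fun k => f k x) (∑' k, f k x) := by
    simpa using (hasSum_of_hasFPowerSeriesOnBall hf hq hx).summable.hasSum
  have htw : t • w ∈ Metric.eball 0 (R - ‖x‖₊) := by
    have htr : ‖t • w‖ ≤ r := le_trans (by rw [norm_smul, norm_smul]; gcongr) hw
    rw [mem_eball_zero_iff, lt_tsub_iff_right, enorm_eq_nnnorm]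
    exact lt_of_le_of_lt (add_le_add (by exact_mod_cast htr) hxr.le) hrR
  have ha := (hp.changeOrigin (hxr.trans hrp)).hasSum htw
  rw [zero_add] at ha
  refine ha.unique ?_
  simpa only [f, Function.comp_apply, ev_lineCoeff ht] using hb.mapL (ev δ t)

lemma eventually_exists_line_expansion (ha : AnalyticAt 𝕜 a 0) (w : E) :
    ∀ᶠ δ : 𝕜 in 𝓝 0, ∃ b : E → SeqOne F, AnalyticAt 𝕜 b 0 ∧
      ∀ᶠ x in 𝓝 0, ∀ t, ‖t‖ < ‖δ‖ → a (x + t • w) = ev δ t (b x) := by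
  obtain ⟨p, R, hp⟩ := ha
  obtain ⟨s, hs, hsR⟩ := ENNReal.lt_iff_exists_nnreal_btwn.1 hp.r_pos
  have hr : 0 < s / 2 := half_pos (by simpa using hs)
  have hrR : ((s / 2 : ℝ≥0) + (s / 2 : ℝ≥0) : ℝ≥0∞) < R := by
    rwa [← ENNReal.coe_add, add_halves]
  have hsmall : ∀ᶠ δ : 𝕜 in 𝓝 0, ‖δ • w‖ < (s / 2 : ℝ≥0) :=
    (ContinuousAt.norm (by fun_prop)).eventually_lt_const (by simpa using hs)
  filter_upwards [hsmall] with δ hδ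
  obtain ⟨b, hb, hab⟩ := exists_line_expansion hr hp hrR hδ.le
  refine ⟨b, hb, ?_⟩
  filter_upwards [Metric.ball_mem_nhds (0 : E) (NNReal.coe_pos.2 hr)] with x hx
  exact hab x (by simpa using hx)

lemma eventually_exists_expansion_snd {a : E × 𝕜 → F} (ha : AnalyticAt 𝕜 a 0) :
    ∀ᶠ δ : 𝕜 in 𝓝 0, ∃ b : E → SeqOne F, AnalyticAt 𝕜 b 0 ∧
      ∀ᶠ x in 𝓝 0, ∀ t, ‖t‖ < ‖δ‖ → a (x, t) = ev δ t (b x) := by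
  filter_upwards [eventually_exists_line_expansion ha (0, 1)] with δ ⟨b, hb, hab⟩
  let i : E →L[𝕜] E × 𝕜 := .inl 𝕜 E 𝕜
  have hi : Tendsto i (𝓝 0) (𝓝 0) := by simpa using i.continuous.tendsto 0
  refine ⟨b ∘ i, AnalyticAt.compContinuousLinearMap (by simpa using hb), ?_⟩
  filter_upwards [hi.eventually hab] with x hx t ht
  simpa [i] using hx t ht

end LineExpansion

section AnalyticFamilies

variable {𝕜 E F G : Type*} [NontriviallyNormedField 𝕜] [NormedAddCommGroup E] [NormedSpace 𝕜 E]
  [NormedAddCommGroup F] [NormedSpace 𝕜 F] [NormedAddCommGroup G] [NormedSpace 𝕜 G]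

lemma analyticAt_clm_apply {T : E → F →L[𝕜] G} {y : E → F} {x : E} (hT : AnalyticAt 𝕜 T x)
    (hy : AnalyticAt 𝕜 y x) : AnalyticAt 𝕜 (fun z => T z (y z)) x :=
  ((ContinuousLinearMap.id 𝕜 (F →L[𝕜] G)).analyticAt_bilinear (T x, y x)).comp₂ hT hy

lemma analyticAt_clm_comp (L : F →L[𝕜] G) {y : E → F} {x : E} (hy : AnalyticAt 𝕜 y x) :
    AnalyticAt 𝕜 (fun z => L (y z)) x :=
  (L.analyticAt _).fun_comp hy

lemma exists_analyticAt_apply_eq [CompleteSpace F] {R : E → F →L[𝕜] F} {y : E → F} {x : E}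
    (hR : AnalyticAt 𝕜 R x) (hRx : IsUnit (R x)) (hy : AnalyticAt 𝕜 y x) :
    ∃ z : E → F, AnalyticAt 𝕜 z x ∧ ∀ᶠ x' in 𝓝 x, R x' (z x') = y x' := by
  have hinv : AnalyticAt 𝕜 (fun x' => Ring.inverse (R x')) x :=
    AnalyticAt.fun_comp (g := Ring.inverse) (hRx.unit_spec ▸ analyticAt_inverse hRx.unit) hR
  refine ⟨fun x' => Ring.inverse (R x') (y x'), analyticAt_clm_apply hinv hy, ?_⟩
  filter_upwards [hR.continuousAt.eventually (Units.isOpen.mem_nhds hRx)] with x' hx'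
  exact congr($(Ring.mul_inverse_cancel _ hx') (y x'))

end AnalyticFamilies

section WeierstrassDivision

variable {𝕜 E F : Type*} [NontriviallyNormedField 𝕜] [NormedAddCommGroup E] [NormedSpace 𝕜 E]
  [NormedAddCommGroup F] [NormedSpace 𝕜 F] [CompleteSpace F]

open SeqOne

/- Take for `q` and `r` the quotient and the remainder of one and the same sequence `y` in the
division by the `d`-th power of the variable. Then the equation reads `R x (y x) = α x` with an
operator `R x` such that `R 0 = 1`. -/
lemma exists_mulOp_add_head_eq {β : E → SeqOne 𝕜} {α : E → SeqOne F} (hβ : AnalyticAt 𝕜 β 0)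
    (hα : AnalyticAt 𝕜 α 0) {d : ℕ} {c : 𝕜} (hc : c ≠ 0) (hβ0 : β 0 = single 𝕜 d c) :
    ∃ q r : E → SeqOne F, AnalyticAt 𝕜 q 0 ∧ AnalyticAt 𝕜 r 0 ∧
      ∀ᶠ x in 𝓝 0, mulOp (β x) (q x) + head 𝕜 d (r x) = α x := by
  let R (x : E) : SeqOne F →L[𝕜] SeqOne F := mulOp (β x) * (c⁻¹ • unshift 𝕜 d) + head 𝕜 d
  have hmul : AnalyticAt 𝕜 (fun x => (mulOp (β x) : SeqOne F →L[𝕜] SeqOne F)) 0 :=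
    analyticAt_clm_comp (G := SeqOne F →L[𝕜] SeqOne F) mulOp hβ
  have hR : AnalyticAt 𝕜 R 0 := (hmul.fun_mul analyticAt_const).fun_add analyticAt_const
  have hR0 : R 0 = 1 := by
    rw [← shift_mul_unshift_add_head 𝕜 d]
    simp [R, hβ0, mulOp_single, smul_smul, hc]
  obtain ⟨y, hy, hRy⟩ := exists_analyticAt_apply_eq hR (hR0 ▸ isUnit_one) hα
  exact ⟨fun x => (c⁻¹ • unshift 𝕜 d) (y x), y, analyticAt_clm_comp _ hy, hy, hRy⟩

lemma weierstrass_division_of_eq_pow [CompleteSpace 𝕜] {f : E × 𝕜 → 𝕜} {a : E × 𝕜 → F}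
    (hf : AnalyticAt 𝕜 f 0) (ha : AnalyticAt 𝕜 a 0) {d : ℕ} (hfd : ∀ᶠ t in 𝓝 0, f (0, t) = t ^ d) :
    ∃ (q : E × 𝕜 → F) (r : Fin d → E → F), AnalyticAt 𝕜 q 0 ∧ (∀ s, AnalyticAt 𝕜 (r s) 0) ∧
      ∀ᶠ z in 𝓝 0, a z = f z • q z + ∑ s : Fin d, z.2 ^ (s : ℕ) • r s z.1 := by
  obtain ⟨δ, ⟨⟨β, hβ, hfβ⟩, α, hα, haα⟩, hδ⟩ :=
    (((eventually_exists_expansion_snd hf).and (eventually_exists_expansion_snd ha)).filter_mono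
      nhdsWithin_le_nhds |>.and (self_mem_nhdsWithin (s := {0}ᶜ))).exists
  have hlt : ∀ᶠ t : 𝕜 in 𝓝 0, ‖t‖ < ‖δ‖ :=
    continuous_norm.continuousAt.eventually_lt_const (by simpa using hδ)
  have hβ0 : β 0 = single 𝕜 d (δ ^ d) := by
    refine eq_of_eventually_ev_eq hδ ?_
    filter_upwards [hlt, hfd] with t ht hft
    rw [← hfβ.self_of_nhds t ht, hft, ev_single ht, smul_eq_mul, ← mul_pow, div_mul_cancel₀ _ hδ]
  obtain ⟨q, r, hq, hr, hqr⟩ := exists_mulOp_add_head_eq hβ hα (pow_ne_zero d hδ) hβ0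
  refine ⟨fun z => ev δ z.2 (q z.1), fun s x => (δ ^ (s : ℕ))⁻¹ • proj 𝕜 s (r x),
    analyticAt_clm_apply ?_ ?_, fun s => analyticAt_const.smul (analyticAt_clm_comp _ hr), ?_⟩
  · exact AnalyticAt.fun_comp (g := ev δ) (analyticAt_ev (by simpa using hδ)) analyticAt_snd
  · exact AnalyticAt.fun_comp (g := q) hq analyticAt_fst
  · have hfst : Tendsto Prod.fst (𝓝 (0 : E × 𝕜)) (𝓝 0) := continuous_fst.tendsto 0
    have hsnd : Tendsto Prod.snd (𝓝 (0 : E × 𝕜)) (𝓝 0) := continuous_snd.tendsto 0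
    filter_upwards [hsnd.eventually hlt, hfst.eventually hfβ, hfst.eventually haα,
      hfst.eventually hqr] with ⟨x, t⟩ ht hfx hax hx
    rw [hfx t ht, hax t ht, ← hx, map_add, ev_mulOp ht, ev_head ht]
    simp only [smul_smul, proj_apply, mul_pow, inv_pow, div_eq_mul_inv]

lemma weierstrass_division [CompleteSpace 𝕜] {f : E × 𝕜 → 𝕜} {a : E × 𝕜 → F}
    (hf : AnalyticAt 𝕜 f 0) (ha : AnalyticAt 𝕜 a 0) (hf0 : ¬ ∀ᶠ t in 𝓝 0, f (0, t) = 0) :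
    ∃ (d : ℕ) (q : E × 𝕜 → F) (r : Fin d → E → F),
      AnalyticAt 𝕜 q 0 ∧ (∀ s, AnalyticAt 𝕜 (r s) 0) ∧
      ∀ᶠ z in 𝓝 0, a z = f z • q z + ∑ s : Fin d, z.2 ^ (s : ℕ) • r s z.1 := by
  have hf1 : AnalyticAt 𝕜 (fun t => f (0, t)) 0 :=
    AnalyticAt.fun_comp (g := f) hf (analyticAt_const.prod analyticAt_id)
  obtain ⟨d, u, hu, hu0, hfu⟩ := hf1.exists_eventuallyEq_pow_smul_nonzero_iff.2 hf0
  have hu' : AnalyticAt 𝕜 (fun z : E × 𝕜 => u z.2) 0 :=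
    AnalyticAt.fun_comp (g := u) hu analyticAt_snd
  have hdiv : ∀ᶠ t in 𝓝 0, f (0, t) / u t = t ^ d := by
    filter_upwards [hfu, hu.continuousAt.eventually_ne hu0] with t ht hut
    rw [ht, sub_zero, smul_eq_mul, mul_div_cancel_right₀ _ hut]
  obtain ⟨q, r, hq, hr, h⟩ := weierstrass_division_of_eq_pow (hf.div hu' hu0) ha hdiv
  refine ⟨d, fun z => (u z.2)⁻¹ • q z, r, (hu'.inv hu0).smul hq, hr, ?_⟩
  filter_upwards [h] with z hz
  rw [hz, smul_smul, Pi.div_apply, div_eq_mul_inv]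

end WeierstrassDivision

section FiniteRank

variable {𝕜 E E' F ι : Type*} [NontriviallyNormedField 𝕜] [NormedAddCommGroup E] [NormedSpace 𝕜 E]
  [NormedAddCommGroup E'] [NormedSpace 𝕜 E'] [NormedAddCommGroup F] [NormedSpace 𝕜 F]

/-- The families of operators on `F`, parametrised by `E`, that are finite sums of families
`x ↦ φᵢ ⊗ c x` with `c` analytic at `0`. If such a family fixes the vectors `a x`, then finitely
many of the components `φᵢ (a x)` determine `a x`. -/
def finiteRankFamilies (E : Type*) [NormedAddCommGroup E] [NormedSpace 𝕜 E]
    (φ : ι → F →L[𝕜] 𝕜) : Submodule 𝕜 (E → F →L[𝕜] F) :=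
  Submodule.span 𝕜 {T | ∃ i, ∃ c : E → F, AnalyticAt 𝕜 c 0 ∧ T = fun x => (φ i).smulRight (c x)}

namespace finiteRankFamilies

variable {φ : ι → F →L[𝕜] 𝕜} {T : E → F →L[𝕜] F}

lemma smulRight_mem (i : ι) {c : E → F} (hc : AnalyticAt 𝕜 c 0) :
    (fun x => (φ i).smulRight (c x)) ∈ finiteRankFamilies E φ :=
  Submodule.subset_span ⟨i, c, hc, rfl⟩

lemma analyticAt (hT : T ∈ finiteRankFamilies E φ) : AnalyticAt 𝕜 T 0 := by
  induction hT using Submodule.span_induction with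
  | mem T hT =>
    obtain ⟨i, c, hc, rfl⟩ := hT
    exact analyticAt_clm_comp (ContinuousLinearMap.smulRightL 𝕜 F F (φ i)) hc
  | zero => exact analyticAt_const
  | add S T _ _ hS hT => exact hS.add hT
  | smul k T _ hT => exact analyticAt_const.smul hT

lemma mul_mem {S : E → F →L[𝕜] F} (hS : AnalyticAt 𝕜 S 0) (hT : T ∈ finiteRankFamilies E φ) :
    S * T ∈ finiteRankFamilies E φ := by
  induction hT using Submodule.span_induction with
  | mem T hT =>
    obtain ⟨i, c, hc, rfl⟩ := hT
    convert smulRight_mem (φ := φ) i (analyticAt_clm_apply hS hc) using 1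
    ext x v
    simp
  | zero => simp
  | add T T' _ _ hT hT' => rw [mul_add]; exact add_mem hT hT'
  | smul k T _ hT => rw [mul_smul_comm]; exact Submodule.smul_mem _ k hT

lemma comp_mem (L : E' →L[𝕜] E) (hT : T ∈ finiteRankFamilies E φ) :
    T ∘ L ∈ finiteRankFamilies E' φ := by
  induction hT using Submodule.span_induction with
  | mem T hT =>
    obtain ⟨i, c, hc, rfl⟩ := hT
    exact smulRight_mem i (hc := AnalyticAt.compContinuousLinearMap (by rwa [map_zero]))
  | zero => exact zero_mem _
  | add T T' _ _ hT hT' => exact add_mem hT hT'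
  | smul k T _ hT => exact Submodule.smul_mem _ k hT

lemma exists_eventually_norm_le (hT : T ∈ finiteRankFamilies E φ) :
    ∃ (s : Finset ι) (C : ℝ), ∀ᶠ x in 𝓝 0, ∀ v M, (∀ i ∈ s, ‖φ i v‖ ≤ M) → ‖T x v‖ ≤ C * M := by
  classical
  induction hT using Submodule.span_induction with
  | mem T hT =>
    obtain ⟨i, c, hc, rfl⟩ := hT
    refine ⟨{i}, ‖c 0‖ + 1, ?_⟩
    filter_upwards [hc.continuousAt.norm.eventually_lt_const (lt_add_one _)] with x hx v M hM
    rw [ContinuousLinearMap.smulRight_apply, norm_smul, mul_comm]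
    exact mul_le_mul hx.le (hM i (Finset.mem_singleton_self i)) (norm_nonneg _) (by positivity)
  | zero => exact ⟨∅, 0, by simp⟩
  | add T T' _ _ hT hT' =>
    obtain ⟨s, C, hs⟩ := hT
    obtain ⟨s', C', hs'⟩ := hT'
    refine ⟨s ∪ s', C + C', ?_⟩
    filter_upwards [hs, hs'] with x hx hx' v M hM
    rw [add_mul]
    exact (norm_add_le _ _).trans (add_le_add (hx v M fun i hi => hM i (Finset.mem_union_left _ hi))
      (hx' v M fun i hi => hM i (Finset.mem_union_right _ hi)))
  | smul k T _ hT =>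
    obtain ⟨s, C, hs⟩ := hT
    refine ⟨s, ‖k‖ * C, ?_⟩
    filter_upwards [hs] with x hx v M hM
    rw [Pi.smul_apply, smul_apply, norm_smul, mul_assoc]
    gcongr
    exact hx v M hM

lemma exists_eventually_apply_eq_self_of_forall {κ : Type*} [Finite κ]
    (h : ∀ a : E → F, AnalyticAt 𝕜 a 0 →
      ∃ T ∈ finiteRankFamilies E φ, ∀ᶠ x in 𝓝 0, T x (a x) = a x)
    {a : κ → E → F} (ha : ∀ s, AnalyticAt 𝕜 (a s) 0) :
    ∃ T ∈ finiteRankFamilies E φ, ∀ᶠ x in 𝓝 0, ∀ s, T x (a s x) = a s x := by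
  classical
  cases nonempty_fintype κ
  suffices H : ∀ I : Finset κ, ∃ T ∈ finiteRankFamilies E φ,
      ∀ᶠ x in 𝓝 0, ∀ s ∈ I, T x (a s x) = a s x by
    simpa using H Finset.univ
  intro I
  induction I using Finset.induction with
  | empty => exact ⟨0, zero_mem _, by simp⟩
  | insert s I _ ih =>
    obtain ⟨T, hT, hTa⟩ := ih
    obtain ⟨T', hT', hTa'⟩ := h (fun x => a s x - T x (a s x))
      ((ha s).fun_sub (analyticAt_clm_apply (analyticAt hT) (ha s)))
    -- `1 - (T + T' - T' T) = (1 - T') (1 - T)`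
    refine ⟨T + T' - T' * T,
      sub_mem (add_mem hT hT') (mul_mem (analyticAt hT') hT), ?_⟩
    filter_upwards [hTa, hTa'] with x hx hx'
    refine Finset.forall_mem_insert .. |>.2 ⟨?_, fun j hj => ?_⟩
    · simp only [map_sub] at hx'
      simp only [Pi.sub_apply, Pi.add_apply, Pi.mul_apply, sub_apply, add_apply,
        mul_apply_eq_comp]
      rw [add_sub_assoc, hx', add_sub_cancel]
    · simp [hx j hj]

lemma exists_eventually_apply_eq_self_of_ne_zero {a : E → F} (ha : AnalyticAt 𝕜 a 0) {i : ι}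
    (hi : φ i (a 0) ≠ 0) :
    ∃ T ∈ finiteRankFamilies E φ, ∀ᶠ x in 𝓝 0, T x (a x) = a x := by
  have hφa : AnalyticAt 𝕜 (fun x => φ i (a x)) 0 := analyticAt_clm_comp (φ i) ha
  refine ⟨_, smulRight_mem i ((hφa.inv hi).smul ha), ?_⟩
  filter_upwards [hφa.continuousAt.eventually_ne hi] with x hx
  simp [smul_smul, hx]

/- With a family `T` that fixes the remainders, `a - T a = φᵢ(a) (q - T q)`. -/
lemma exists_eventually_apply_eq_self_of_division {d : ℕ} {i : ι} {a q : E × 𝕜 → F}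
    {r : Fin d → E → F} (hq : AnalyticAt 𝕜 q 0) (hT : T ∈ finiteRankFamilies E φ)
    (hTr : ∀ᶠ x in 𝓝 0, ∀ s, T x (r s x) = r s x)
    (hdiv : ∀ᶠ z in 𝓝 0, a z = φ i (a z) • q z + ∑ s : Fin d, z.2 ^ (s : ℕ) • r s z.1) :
    ∃ T ∈ finiteRankFamilies (E × 𝕜) φ, ∀ᶠ z in 𝓝 0, T z (a z) = a z := by
  have hT' : T ∘ Prod.fst ∈ finiteRankFamilies (E × 𝕜) φ :=
    comp_mem (ContinuousLinearMap.fst 𝕜 E 𝕜) hT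
  refine ⟨T ∘ Prod.fst + (1 - T ∘ Prod.fst) * fun z => (φ i).smulRight (q z),
    add_mem hT' (mul_mem (analyticAt_const.sub (analyticAt hT')) (smulRight_mem i hq)), ?_⟩
  filter_upwards [hdiv, (continuous_fst.tendsto (0 : E × 𝕜)).eventually hTr] with z hz hTz
  have hfix : T z.1 (a z - φ i (a z) • q z) = a z - φ i (a z) • q z := by
    rw [sub_eq_iff_eq_add'.2 hz, map_sum]
    exact Finset.sum_congr rfl fun s _ => by rw [map_smul, hTz s]
  rw [map_sub, map_smul] at hfix
  simp only [Pi.add_apply, Pi.mul_apply, Pi.sub_apply, Pi.one_apply, Function.comp_apply,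
    add_apply, sub_apply, mul_apply_eq_comp, ContinuousLinearMap.smulRight_apply,
    one_apply_eq_self, map_smul, smul_sub]
  rw [sub_eq_iff_eq_add.1 hfix]
  abel

end finiteRankFamilies

end FiniteRank

section ZeroGerms

variable {𝕜 E F ι : Type*} [NontriviallyNormedField 𝕜] [NormedAddCommGroup E] [NormedSpace 𝕜 E]
  [NormedAddCommGroup F] [NormedSpace 𝕜 F] {f : E → F}

lemma eventually_eq_zero_of_forall_apply_eq_zero {p : FormalMultilinearSeries 𝕜 E F}
    (hp : HasFPowerSeriesAt f p 0) (h : ∀ n y, p n (fun _ => y) = 0) : ∀ᶠ x in 𝓝 0, f x = 0 := by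
  filter_upwards [hp.eventually_hasSum] with y hy
  simp only [h, zero_add] at hy
  exact hy.unique hasSum_zero

lemma exists_line_not_eventually_eq_zero (hf : AnalyticAt 𝕜 f 0) (hf0 : ¬ ∀ᶠ x in 𝓝 0, f x = 0) :
    ∃ w : E, ¬ ∀ᶠ t : 𝕜 in 𝓝 0, f (t • w) = 0 := by
  by_contra! h
  obtain ⟨p, hp⟩ := hf
  refine hf0 (eventually_eq_zero_of_forall_apply_eq_zero hp fun n w => ?_)
  let L : 𝕜 →L[𝕜] E := ContinuousLinearMap.toSpanSingleton 𝕜 w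
  have hL : HasFPowerSeriesAt (f ∘ L) (p.compContinuousLinearMap L) 0 :=
    HasFPowerSeriesAt.compContinuousLinearMap (by rwa [map_zero])
  have hzero : ∀ᶠ t in 𝓝 0, (f ∘ L) t = 0 := h w
  have h1 := (hL.congr hzero).apply_eq_zero n 1
  rw [FormalMultilinearSeries.compContinuousLinearMap_apply] at h1
  simpa [L, Function.comp_def] using h1

lemma exists_clm_not_eventually_eq_zero {φ : ι → F →L[𝕜] 𝕜} (hφ : ∀ v, (∀ i, φ i v = 0) → v = 0)
    (hf : AnalyticAt 𝕜 f 0) (hf0 : ¬ ∀ᶠ x in 𝓝 0, f x = 0) :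
    ∃ i, ¬ ∀ᶠ x in 𝓝 0, φ i (f x) = 0 := by
  by_contra! h
  obtain ⟨p, R, hp⟩ := hf
  refine hf0 (eventually_eq_zero_of_forall_apply_eq_zero hp.hasFPowerSeriesAt fun n y =>
    hφ _ fun i => ?_)
  have hφf := ((φ i).comp_hasFPowerSeriesOnBall hp).hasFPowerSeriesAt
  exact (hφf.congr (h i)).apply_eq_zero n y

end ZeroGerms

section Finiteness

lemma exists_continuousLinearEquiv_prod_of_ne_zero {𝕜 E : Type*} [NontriviallyNormedField 𝕜]
    [CompleteSpace 𝕜] [NormedAddCommGroup E] [NormedSpace 𝕜 E] [FiniteDimensional 𝕜 E] {w : E}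
    (hw : w ≠ 0) :
    ∃ (E' : Submodule 𝕜 E) (e : (E' × 𝕜) ≃L[𝕜] E),
      Module.finrank 𝕜 E' < Module.finrank 𝕜 E ∧ ∀ t : 𝕜, e (0, t) = t • w := by
  obtain ⟨E', hE'⟩ := Submodule.exists_isCompl (𝕜 ∙ w)
  let e : (E' × 𝕜) ≃ₗ[𝕜] E :=
    ((LinearEquiv.refl 𝕜 E').prodCongr (LinearEquiv.toSpanNonzeroSingleton 𝕜 E w hw)).trans
      (Submodule.prodEquivOfIsCompl E' (𝕜 ∙ w) hE'.symm)
  refine ⟨E', e.toContinuousLinearEquiv, ?_, fun t => ?_⟩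
  · rw [← e.finrank_eq]; simp
  · simp [e]

variable {𝕜 F ι : Type*} [NontriviallyNormedField 𝕜] [CompleteSpace 𝕜] [NormedAddCommGroup F]
  [NormedSpace 𝕜 F] [CompleteSpace F] {φ : ι → F →L[𝕜] 𝕜}

open finiteRankFamilies

lemma exists_eventually_apply_eq_self_prod {E : Type*} [NormedAddCommGroup E] [NormedSpace 𝕜 E]
    (ih : ∀ (d : ℕ) (r : Fin d → E → F), (∀ s, AnalyticAt 𝕜 (r s) 0) →
      ∃ T ∈ finiteRankFamilies E φ, ∀ᶠ x in 𝓝 0, ∀ s, T x (r s x) = r s x)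
    {a : E × 𝕜 → F} (ha : AnalyticAt 𝕜 a 0) {i : ι} (hi : ¬ ∀ᶠ t in 𝓝 0, φ i (a (0, t)) = 0) :
    ∃ T ∈ finiteRankFamilies (E × 𝕜) φ, ∀ᶠ z in 𝓝 0, T z (a z) = a z := by
  obtain ⟨d, q, r, hq, hr, hdiv⟩ := weierstrass_division (analyticAt_clm_comp (φ i) ha) ha hi
  obtain ⟨T, hT, hTr⟩ := ih d r hr
  exact exists_eventually_apply_eq_self_of_division hq hT hTr hdiv

universe u

/- Induction on `dim E`: in coordinates `E' × 𝕜` in which some `φᵢ ∘ a` does not vanish on the last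
axis, divide `a` by `φᵢ ∘ a`. The remainders are finitely many germs on `E'`. -/
theorem exists_eventually_apply_eq_self (hφ : ∀ v, (∀ i, φ i v = 0) → v = 0) (E : Type u)
    [NormedAddCommGroup E] [NormedSpace 𝕜 E] [FiniteDimensional 𝕜 E] {a : E → F}
    (ha : AnalyticAt 𝕜 a 0) : ∃ T ∈ finiteRankFamilies E φ, ∀ᶠ x in 𝓝 0, T x (a x) = a x := by
  induction hm : Module.finrank 𝕜 E using Nat.strong_induction_on generalizing E with
  | _ m ih =>
  by_cases ha0 : ∀ᶠ x in 𝓝 0, a x = 0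
  · exact ⟨0, zero_mem _, by filter_upwards [ha0] with x hx; simp [hx]⟩
  obtain ⟨i, hi⟩ := exists_clm_not_eventually_eq_zero hφ ha ha0
  by_cases hi0 : φ i (a 0) = 0
  swap
  · exact exists_eventually_apply_eq_self_of_ne_zero ha hi0
  obtain ⟨w, hw⟩ := exists_line_not_eventually_eq_zero (analyticAt_clm_comp (φ i) ha) hi
  have hw0 : w ≠ 0 := by
    rintro rfl
    simp [hi0] at hw
  obtain ⟨E', e, hE', he⟩ :=
    exists_continuousLinearEquiv_prod_of_ne_zero (𝕜 := 𝕜) hw0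
  have hae : AnalyticAt 𝕜 (a ∘ e.toContinuousLinearMap) 0 :=
    AnalyticAt.compContinuousLinearMap (by rwa [map_zero])
  obtain ⟨T, hT, hTa⟩ := exists_eventually_apply_eq_self_prod
    (fun d r hr => exists_eventually_apply_eq_self_of_forall
      (fun a ha => ih _ (hm ▸ hE') E' ha rfl) hr) hae (by simpa [he] using hw)
  refine ⟨T ∘ e.symm.toContinuousLinearMap, comp_mem _ hT, ?_⟩
  filter_upwards [(e.symm.continuous.tendsto' 0 0 (map_zero _)).eventually hTa] with x hx
  simpa using hx

open SeqOne in
theorem exists_eventually_exists_norm_le_apply {E : Type*} [NormedAddCommGroup E]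
    [NormedSpace 𝕜 E] [FiniteDimensional 𝕜 E] [SeparatingDual 𝕜 F] {a : E → SeqOne F}
    (ha : AnalyticAt 𝕜 a 0) :
    ∃ (k : ℕ) (C : ℝ), ∀ᶠ x in 𝓝 0, ∃ l ≤ k, ‖a x‖ ≤ C * ‖a x l‖ := by
  let φ (i : ℕ × StrongDual 𝕜 F) : SeqOne F →L[𝕜] 𝕜 := i.2.comp (proj 𝕜 i.1)
  have hφ (y : SeqOne F) (hy : ∀ i, φ i y = 0) : y = 0 := lp.ext (funext fun l =>
    SeparatingDual.eq_zero_of_forall_dual_eq_zero (R := 𝕜) fun ψ => hy (l, ψ))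
  obtain ⟨T, hT, hTa⟩ := exists_eventually_apply_eq_self hφ E ha
  obtain ⟨s, C, hs⟩ := exists_eventually_norm_le hT
  refine ⟨s.sup Prod.fst, C * ∑ i ∈ s, ‖i.2‖, ?_⟩
  filter_upwards [hTa, hs] with x hx hsx
  obtain ⟨l, hl, hmax⟩ := (Set.finite_Iic (s.sup Prod.fst)).exists_maximalFor
    (fun l => ‖a x l‖) _ ⟨0, mem_Iic.2 zero_le⟩
  refine ⟨l, hl, ?_⟩
  have hsum := hsx (a x) ((∑ i ∈ s, ‖i.2‖) * ‖a x l‖) fun i hi => by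
    have hil : ‖a x i.1‖ ≤ ‖a x l‖ :=
      (le_total _ _).elim id fun h => hmax (Finset.le_sup (f := Prod.fst) hi) h
    have hi_le : ‖i.2‖ ≤ ∑ i ∈ s, ‖i.2‖ :=
      Finset.single_le_sum (f := fun i => ‖i.2‖) (fun _ _ => norm_nonneg _) hi
    exact (i.2.le_opNorm _).trans
      (mul_le_mul hi_le hil (norm_nonneg _) ((norm_nonneg _).trans hi_le))
  rwa [hx, ← mul_assoc] at hsum

end Finiteness

section NullSets

variable {E F : Type*} [NormedAddCommGroup E] [NormedSpace ℝ E] [NormedAddCommGroup F]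
  [NormedSpace ℝ F] {f : E → F}

lemma ae_add_smul_notMem_zeros {U : Set E} (hU : IsOpen U) (hconv : Convex ℝ U)
    (hf : AnalyticOnNhd ℝ f U) {p : E} (hp : p ∈ U) (hfp : f p ≠ 0) (u : E) :
    ∀ᵐ t : ℝ, p + t • u ∉ {x ∈ U | f x = 0} := by
  let L : ℝ →ᵃ[ℝ] E := AffineMap.lineMap p (p + u)
  have hL (t : ℝ) : L t = p + t • u := by simp [L, AffineMap.lineMap_apply, add_comm]
  have hLan (t : ℝ) : AnalyticAt ℝ L t := by
    simp only [funext hL]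
    fun_prop
  have hWo : IsOpen (L ⁻¹' U) :=
    hU.preimage (continuous_iff_continuousAt.2 fun t => (hLan t).continuousAt)
  have h0 : (0 : ℝ) ∈ L ⁻¹' U := by simpa [hL] using hp
  have han : AnalyticOnNhd ℝ (f ∘ L) (L ⁻¹' U) := fun t ht => (hf _ ht).comp (hLan t)
  have hcod := han.preimage_zero_mem_codiscreteWithin (x := 0) (by simpa [hL] using hfp) h0
    ((hconv.affine_preimage L).isConnected ⟨0, h0⟩)
  have hae := (ae_restrict_iff' hWo.measurableSet).1
    (ae_restrict_le_codiscreteWithin (μ := volume) hWo.measurableSet hcod)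
  filter_upwards [hae] with t ht hmem
  rw [← hL] at hmem
  exact ht hmem.1 hmem.2

variable [FiniteDimensional ℝ E] [MeasurableSpace E] [BorelSpace E] (μ : Measure E)
  [μ.IsAddHaarMeasure]

/- By Fubini's theorem, almost every homothety with centre `p` pulls the zero set back to a null
set. -/
lemma addHaar_zeros_eq_zero {U : Set E} (hU : IsOpen U) (hconv : Convex ℝ U)
    (hf : AnalyticOnNhd ℝ f U) {p : E} (hp : p ∈ U) (hfp : f p ≠ 0) :
    μ {x ∈ U | f x = 0} = 0 := by
  have := FiniteDimensional.proper ℝ E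
  set S : Set E := {x ∈ U | f x = 0}
  have hS : MeasurableSet S := by
    have : S = U \ (U ∩ f ⁻¹' {0}ᶜ) := by ext; simp +contextual [S]
    rw [this]
    exact hU.measurableSet.diff
      (hf.continuousOn.isOpen_inter_preimage hU isOpen_compl_singleton).measurableSet
  have hmeas : MeasurableSet {z : E × ℝ | p + z.2 • z.1 ∉ S} :=
    (hS.preimage (by fun_prop : Measurable fun z : E × ℝ => p + z.2 • z.1)).compl
  have hfub : ∀ᵐ t : ℝ, ∀ᵐ u ∂μ, p + t • u ∉ S :=
    (Measure.ae_ae_comm hmeas).1 (.of_forall (ae_add_smul_notMem_zeros hU hconv hf hp hfp))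
  obtain ⟨t, ht, ht0⟩ := (hfub.and (Measure.ae_ne volume 0)).exists
  have hpre : μ ((t • ·) ⁻¹' ((p + ·) ⁻¹' S)) = 0 :=
    measure_eq_zero_iff_ae_notMem.2 ht
  rw [Measure.addHaar_preimage_smul μ ht0, measure_preimage_add] at hpre
  simpa [ht0] using hpre

lemma exists_mem_nhds_addHaar_zeros_eq_zero [CompleteSpace F] (hf : AnalyticAt ℝ f 0)
    (hf0 : ¬ ∀ᶠ x in 𝓝 0, f x = 0) : ∃ V ∈ 𝓝 0, μ {x ∈ V | f x = 0} = 0 := by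
  obtain ⟨r, hr, hfr⟩ := hf.exists_ball_analyticOnNhd
  have hball := Metric.ball_mem_nhds (0 : E) hr
  obtain ⟨p, hfp, hp⟩ := ((not_eventually.1 hf0).and_eventually hball).exists
  exact ⟨_, hball, addHaar_zeros_eq_zero μ Metric.isOpen_ball (convex_ball _ _) hfr hp hfp⟩

end NullSets

section Comparison

variable {F : Type*} [NormedAddCommGroup F]

lemma norm_comparison_of_norm_sub_lt {D₀ D : F} (h : ‖D - D₀‖ < 1 / 2 * ‖D₀‖) :
    0 < 1 / 2 * ‖D₀‖ ∧ 1 / 2 * ‖D₀‖ < ‖D‖ ∧ ‖D‖ < 2 * ‖D₀‖ := by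
  have hpos : 0 < 1 / 2 * ‖D₀‖ := (norm_nonneg _).trans_lt h
  have hupper : ‖D‖ - ‖D₀‖ ≤ ‖D - D₀‖ := norm_sub_norm_le D D₀
  have hlower : ‖D₀‖ - ‖D‖ ≤ ‖D - D₀‖ := norm_sub_rev D₀ D ▸ norm_sub_norm_le D₀ D
  exact ⟨hpos, by linarith, by linarith⟩

variable [NormedSpace ℝ F] [CompleteSpace F] {δ : ℝ}

open SeqOne

open scoped Nat in
lemma eventually_norm_iteratedDeriv_ev_sub_lt (hδ : δ ≠ 0) (l : ℕ) (C : ℝ) :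
    ∀ᶠ t in 𝓝 0, ∀ y : SeqOne F, y ≠ 0 → ‖y‖ ≤ C * ‖y l‖ →
      ‖iteratedDeriv l (fun s => ev δ s y) t - iteratedDeriv l (fun s => ev δ s y) 0‖ <
        1 / 2 * ‖iteratedDeriv l (fun s => ev δ s y) 0‖ := by
  have hδ0 : ‖(0 : ℝ)‖ < ‖δ‖ := by simpa using hδ
  let D : ℝ → SeqOne F →L[ℝ] F := iteratedDeriv l (ev δ)
  have hD : ContinuousAt D 0 := by
    have h := (analyticAt_ev (F := F) hδ0).iterated_deriv l
    rw [← iteratedDeriv_eq_iterate] at h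
    exact h.continuousAt
  have hc : 0 < ‖(l ! / δ ^ l : ℝ)‖ := norm_pos_iff.2 (by positivity)
  have hDC : ContinuousAt (fun t => ‖D t - D 0‖ * C) 0 :=
    (hD.sub continuousAt_const).norm.mul continuousAt_const
  filter_upwards [hDC.eventually_lt_const (u := 1 / 2 * ‖(l ! / δ ^ l : ℝ)‖) (by simpa using hc),
    continuous_norm.continuousAt.eventually_lt_const hδ0] with t ht htδ y hy hyl
  have hyl0 : 0 < ‖y l‖ := norm_pos_iff.2 fun h => hy (by simpa [h] using hyl)
  rw [iteratedDeriv_ev_apply htδ, iteratedDeriv_ev_apply hδ0, ← sub_apply]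
  calc ‖(D t - D 0) y‖ ≤ ‖D t - D 0‖ * (C * ‖y l‖) := (D t - D 0).le_opNorm_of_le hyl
    _ < 1 / 2 * ‖(l ! / δ ^ l : ℝ)‖ * ‖y l‖ := by rw [← mul_assoc]; gcongr
    _ = 1 / 2 * ‖iteratedDeriv l (ev δ) 0 y‖ := by
      rw [iteratedDeriv_ev_zero hδ, smul_apply, proj_apply, norm_smul, mul_assoc]

lemma eventually_iteratedDeriv_ev_comparison (hδ : δ ≠ 0) (k : ℕ) (C : ℝ) :
    ∀ᶠ t in 𝓝 0, ∀ l ≤ k, ∀ y : SeqOne F, y ≠ 0 → ‖y‖ ≤ C * ‖y l‖ →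
      0 < 1 / 2 * ‖iteratedDeriv l (fun s => ev δ s y) 0‖ ∧
      1 / 2 * ‖iteratedDeriv l (fun s => ev δ s y) 0‖ <
        ‖iteratedDeriv l (fun s => ev δ s y) t‖ ∧
      ‖iteratedDeriv l (fun s => ev δ s y) t‖ <
        2 * ‖iteratedDeriv l (fun s => ev δ s y) 0‖ := by
  refine (eventually_all_finite (finite_Iic k)).2 fun l _ => ?_
  filter_upwards [eventually_norm_iteratedDeriv_ev_sub_lt (F := F) hδ l C] with t ht y hy hyl
  exact norm_comparison_of_norm_sub_lt (ht y hy hyl)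

end Comparison

section Expansions

open SeqOne

variable {𝕜 E F : Type*} [NontriviallyNormedField 𝕜] [NormedAddCommGroup F] [NormedSpace 𝕜 F]
  {δ : 𝕜} {η : ℝ} {f : 𝕜 → F} {y : SeqOne F}

lemma iteratedDeriv_eq_of_forall_eq_ev (hf : ∀ t, ‖t‖ < η → f t = ev δ t y) (l : ℕ) {t : 𝕜}
    (ht : ‖t‖ < η) : iteratedDeriv l f t = iteratedDeriv l (fun s => ev δ s y) t :=
  EventuallyEq.iteratedDeriv_eq l
    ((continuous_norm.continuousAt.eventually_lt_const ht).mono hf)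

lemma forall_eq_zero_iff_of_forall_eq_ev [CompleteSpace F] (hδ : δ ≠ 0) (hη : 0 < η)
    (hf : ∀ t, ‖t‖ < η → f t = ev δ t y) : (∀ t, ‖t‖ < η → f t = 0) ↔ y = 0 := by
  refine ⟨fun h => eq_of_eventually_ev_eq hδ ?_, fun h t ht => by rw [hf t ht, h, map_zero]⟩
  filter_upwards [continuous_norm.continuousAt.eventually_lt_const (norm_zero.trans_lt hη)]
    with t ht
  rw [← hf t ht, h t ht, map_zero]

lemma eventually_eq_zero_of_eventually_forall_eq_ev [TopologicalSpace E] [Zero E] {g : E × 𝕜 → F}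
    {b : E → SeqOne F} (hδ : δ ≠ 0) (hgb : ∀ᶠ x in 𝓝 0, ∀ t, ‖t‖ < ‖δ‖ → g (x, t) = ev δ t (b x))
    (hb : ∀ᶠ x in 𝓝 0, b x = 0) : ∀ᶠ z in 𝓝 0, g z = 0 := by
  have hlt : ∀ᶠ t : 𝕜 in 𝓝 0, ‖t‖ < ‖δ‖ :=
    continuous_norm.continuousAt.eventually_lt_const (by simpa using hδ)
  filter_upwards [(hgb.and hb).prodMk_nhds hlt] with ⟨x, t⟩ ⟨⟨hx, hbx⟩, ht⟩
  rw [hx t ht, hbx, map_zero]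

end Expansions

theorem stmt3_general {E F : Type*} [NormedAddCommGroup E] [NormedSpace ℝ E]
    [FiniteDimensional ℝ E] [MeasurableSpace E] [BorelSpace E] (μ : Measure E)
    [μ.IsAddHaarMeasure] [NormedAddCommGroup F] [NormedSpace ℝ F] [CompleteSpace F] {g : E × ℝ → F}
    (hg : AnalyticAt ℝ g 0) (hnz : ¬ ∀ᶠ x in 𝓝 0, g x = 0) :
    ∃ η > (0 : ℝ), ∃ k : ℕ,
      (∀ x' ∈ Metric.ball (0 : E) η,
        (∀ t : ℝ, |t| < η → g (x', t) = 0) ∨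
        ∃ l ≤ k, ∀ t : ℝ, |t| < η →
          0 < (1 / 2) * ‖iteratedDeriv l (fun s => g (x', s)) 0‖ ∧
          (1 / 2) * ‖iteratedDeriv l (fun s => g (x', s)) 0‖ <
            ‖iteratedDeriv l (fun s => g (x', s)) t‖ ∧
          ‖iteratedDeriv l (fun s => g (x', s)) t‖ <
            2 * ‖iteratedDeriv l (fun s => g (x', s)) 0‖) ∧
      μ {x' ∈ Metric.ball (0 : E) η | ∀ t : ℝ, |t| < η → g (x', t) = 0} = 0 := by
  obtain ⟨δ, ⟨b, hb, hgb⟩, hδ⟩ := ((eventually_exists_expansion_snd hg).filter_mono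
    nhdsWithin_le_nhds |>.and (self_mem_nhdsWithin (s := {0}ᶜ))).exists
  have hb0 := mt (eventually_eq_zero_of_eventually_forall_eq_ev hδ hgb) hnz
  obtain ⟨k, C, hkC⟩ := exists_eventually_exists_norm_le_apply hb
  obtain ⟨V, hV, hVnull⟩ := exists_mem_nhds_addHaar_zeros_eq_zero μ hb hb0
  obtain ⟨η₁, hη₁, hx⟩ := Metric.eventually_nhds_iff_ball.1 ((hgb.and hkC).and hV)
  obtain ⟨η₂, hη₂, hcomp⟩ := Metric.eventually_nhds_iff_ball.1
    (eventually_iteratedDeriv_ev_comparison (F := F) hδ k C)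
  obtain ⟨η, hη, hηmin⟩ := exists_between (lt_min (lt_min hη₁ hη₂) (norm_pos_iff.2 hδ))
  obtain ⟨⟨hηη₁, hηη₂⟩, hηδ⟩ := by simpa only [lt_min_iff] using hηmin
  have hball := Metric.ball_subset_ball (x := (0 : E)) hηη₁.le
  have hgη : ∀ x ∈ Metric.ball (0 : E) η, ∀ t : ℝ, ‖t‖ < η → g (x, t) = SeqOne.ev δ t (b x) :=
    fun x hxη t ht => (hx x (hball hxη)).1.1 t (ht.trans hηδ)
  refine ⟨η, hη, k, fun x hxη => ?_, measure_mono_null (fun x ⟨hxη, hgx⟩ => ?_) hVnull⟩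
  · by_cases hbx : b x = 0
    · exact .inl ((forall_eq_zero_iff_of_forall_eq_ev hδ hη (hgη x hxη)).2 hbx)
    obtain ⟨l, hlk, hl⟩ := (hx x (hball hxη)).1.2
    refine .inr ⟨l, hlk, fun t ht => ?_⟩
    rw [iteratedDeriv_eq_of_forall_eq_ev (hgη x hxη) l (norm_zero.trans_lt hη),
      iteratedDeriv_eq_of_forall_eq_ev (hgη x hxη) l ht]
    exact hcomp t (mem_ball_zero_iff.2 (ht.trans hηη₂)) l hlk (b x) hbx hl
  · exact ⟨(hx x (hball hxη)).2, (forall_eq_zero_iff_of_forall_eq_ev hδ hη (hgη x hxη)).1 hgx⟩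

/-- **Theorem 2.1.** Let `g` be real analytic on a neighborhood `U` of the origin of
`ℝⁿ = ℝ^{n-1} × ℝ` (with `m = n - 1`), not identically zero near the origin. Then there are
`η > 0` and `k ≥ 0` such that for each `x'` in the `(n-1)`-dimensional ball `B(0,η)`, either
`g(x', xₙ) = 0` for all `|xₙ| < η`, or there is `0 ≤ l ≤ k` (depending on `x'`) with
`0 < ½|∂ₓₙˡ g(x',0)| < |∂ₓₙˡ g(x',xₙ)| < 2|∂ₓₙˡ g(x',0)|` for all `|xₙ| < η`. Moreover the set
of `x' ∈ B(0,η)` on which `g(x',·)` vanishes for all `|xₙ| < η` has measure zero. -/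
theorem stmt3 (m : ℕ) (g : EuclideanSpace ℝ (Fin m) × ℝ → ℝ)
    (U : Set (EuclideanSpace ℝ (Fin m) × ℝ))
    (hU : U ∈ nhds (0 : EuclideanSpace ℝ (Fin m) × ℝ))
    (hg : AnalyticOnNhd ℝ g U)
    (hnz : ¬ ∀ᶠ x in nhds (0 : EuclideanSpace ℝ (Fin m) × ℝ), g x = 0) :
    ∃ η > (0 : ℝ), ∃ k : ℕ,
      (∀ x' ∈ Metric.ball (0 : EuclideanSpace ℝ (Fin m)) η,
        (∀ t : ℝ, |t| < η → g (x', t) = 0) ∨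
        ∃ l ≤ k, ∀ t : ℝ, |t| < η →
          0 < (1 / 2) * |iteratedDeriv l (fun s => g (x', s)) 0| ∧
          (1 / 2) * |iteratedDeriv l (fun s => g (x', s)) 0| <
            |iteratedDeriv l (fun s => g (x', s)) t| ∧
          |iteratedDeriv l (fun s => g (x', s)) t| <
            2 * |iteratedDeriv l (fun s => g (x', s)) 0|) ∧
      volume {x' ∈ Metric.ball (0 : EuclideanSpace ℝ (Fin m)) η |
        ∀ t : ℝ, |t| < η → g (x', t) = 0} = 0 :=
  stmt3_general volume (hg 0 (mem_of_mem_nhds hU)) hnz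
end

section
/- Let f₁(x₁,...,xₙ), ..., f_l(x₁,...,xₙ) be real analytic functions on a neighborhood of the origin in ℝⁿ, none identically zero. Then there exist η > 0 and a positive integer p such that for every choice of real numbers s₁,...,s_l and every (x₁,...,x_{n−1}) in the (n−1)-dimensional open ball B_{n−1}(0,η), the set {xₙ : |xₙ| < η and f_i(x₁,...,x_{n−1},xₙ) < s_i for each i = 1,...,l} is a union of at most p intervals. -/
open Set MeasureTheory

/-!
Write `f (x, t) = ∑ₖ bₖ(x) tᵏ` with convergent power series `bₖ` whose norms grow at most
geometrically. The coefficients are dominated by finitely many of them: there are `C` and `N` such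
that near the origin every `x` has an index `j ≤ N` with `|bₖ₊₁(x)| ≤ C ‖bₖ₊₁‖ |bⱼ₊₁(x)|` for all
`k`. Hence the power series `∂f/∂t (x, ·)` is dominated by its `j`-th coefficient, and its `j`-th
derivative has constant sign on an interval `|t| < η` independent of `x`. A function is monotone on
each sign interval of its derivative, so each integration at most doubles the number of sign
intervals, and the level `s` plays no role because only the derivative of `f (x, ·) - s` enters.
Intersecting over several functions multiplies the bounds.

The domination is a quantitative form of the noetherianity of the ring of convergent power series.
Assigning distinct primes to the variables as weights, the weight `w^α` of a multi-index determines
`α`, so it defines a total order compatible with addition, and the polyradii `w^(-σ)` give norms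
weighing the term of exponent `α` by `(w^α)^(-σ)`. By Dickson's lemma the ideal spanned by the `bₖ`
has a finite standard basis, and for large `σ` the leading term of each basis element makes up at
least two thirds of its norm. Subtracting a monomial multiple of a basis element to cancel a leading
term then lowers the norm by at least half the size of that term. Repeating this sends the leading
weight to infinity at a total cost controlled by the initial norm, while on a smaller polydisc the
remainder tends to `0`; so the value of an element of the ideal is bounded by its norm times the
values of the basis elements, which are themselves combinations of finitely many of the `bₖ`.
-/

open Filter Topology

noncomputable section

/-- `S` is a union of at most `n` intervals: the members of the family are order-connected, and
some of them may be empty. -/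
def IsUnionOfIntervals {α : Type*} [Preorder α] (n : ℕ) (S : Set α) : Prop :=
  ∃ I : Fin n → Set α, (∀ j, (I j).OrdConnected) ∧ S = ⋃ j, I j

namespace IsUnionOfIntervals

variable {α : Type*} [Preorder α] {n n' : ℕ} {S S' : Set α}

lemma of_card_le {κ : Type*} [Finite κ] {I : κ → Set α} (hI : ∀ k, (I k).OrdConnected)
    (hn : Nat.card κ ≤ n) : IsUnionOfIntervals n (⋃ k, I k) := by
  have e : κ ↪ Fin n := (Finite.equivFin κ).toEmbedding.trans (Fin.castLEEmb hn)
  refine ⟨Function.extend e I ⊥, fun j => ?_, (iSup_extend_bot e.injective I).symm⟩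
  by_cases hj : ∃ k, e k = j
  · obtain ⟨k, rfl⟩ := hj
    simpa only [e.injective.extend_apply] using hI k
  · rw [Function.extend_apply' _ _ _ hj]
    exact ordConnected_empty

lemma mono (h : IsUnionOfIntervals n S) (hn : n ≤ n') : IsUnionOfIntervals n' S := by
  obtain ⟨I, hI, rfl⟩ := h
  exact of_card_le hI (by simpa using hn)

lemma of_ordConnected (h : S.OrdConnected) : IsUnionOfIntervals 1 S :=
  ⟨fun _ => S, fun _ => h, (iUnion_const S).symm⟩

lemma union (h : IsUnionOfIntervals n S) (h' : IsUnionOfIntervals n' S') :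
    IsUnionOfIntervals (n + n') (S ∪ S') := by
  obtain ⟨I, hI, rfl⟩ := h
  obtain ⟨I', hI', rfl⟩ := h'
  rw [show (⋃ j, I j) ∪ ⋃ j, I' j = ⋃ k, Sum.elim I I' k from (iSup_sum (f := Sum.elim I I')).symm]
  exact of_card_le (Sum.rec hI hI') (by simp)

lemma sep {p : α → Prop} (h : IsUnionOfIntervals n S)
    (hp : ∀ I ⊆ S, I.OrdConnected → {t ∈ I | p t}.OrdConnected) :
    IsUnionOfIntervals n {t ∈ S | p t} := by
  obtain ⟨I, hI, rfl⟩ := h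
  refine ⟨fun j => {t ∈ I j | p t}, fun j => hp _ (subset_iUnion I j) (hI j), ?_⟩
  ext t
  simp

lemma iInter {ι : Type*} [Fintype ι] {n : ι → ℕ} {S : ι → Set α}
    (h : ∀ i, IsUnionOfIntervals (n i) (S i)) : IsUnionOfIntervals (∏ i, n i) (⋂ i, S i) := by
  classical
  choose I hI hS using h
  rw [show ⋂ i, S i = ⋃ k : ∀ i, Fin (n i), ⋂ i, I i (k i) by
    simp only [hS, ← iInf_eq_iInter, ← iSup_eq_iUnion, iInf_iSup_eq]]
  exact of_card_le (fun k => ordConnected_iInter fun i => hI i (k i)) (by simp)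

end IsUnionOfIntervals

/-- The sign condition carried through repeated integration: the negativity set of `h` in `J` and
its complement in `J` are both unions of at most `n` intervals. -/
def HasSignIntervals (n : ℕ) (J : Set ℝ) (h : ℝ → ℝ) : Prop :=
  IsUnionOfIntervals n {t ∈ J | h t < 0} ∧ IsUnionOfIntervals n {t ∈ J | 0 ≤ h t}

namespace HasSignIntervals

variable {n : ℕ} {J : Set ℝ} {h h' : ℝ → ℝ}

lemma of_neg (hJ : J.OrdConnected) (hneg : ∀ t ∈ J, h t < 0) : HasSignIntervals 1 J h := by
  constructor
  · rw [sep_eq_self_iff_mem_true.2 hneg]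
    exact .of_ordConnected hJ
  · rw [sep_eq_empty_iff_mem_false.2 fun t ht => (hneg t ht).not_ge]
    exact .of_ordConnected ordConnected_empty

lemma of_nonneg (hJ : J.OrdConnected) (hnonneg : ∀ t ∈ J, 0 ≤ h t) : HasSignIntervals 1 J h := by
  constructor
  · rw [sep_eq_empty_iff_mem_false.2 fun t ht => (hnonneg t ht).not_gt]
    exact .of_ordConnected ordConnected_empty
  · rw [sep_eq_self_iff_mem_true.2 hnonneg]
    exact .of_ordConnected hJ

lemma mono {n' : ℕ} (H : HasSignIntervals n J h) (hn : n ≤ n') : HasSignIntervals n' J h :=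
  ⟨H.1.mono hn, H.2.mono hn⟩

lemma of_hasDerivAt (hd : ∀ t ∈ J, HasDerivAt h (h' t) t) (H : HasSignIntervals n J h') :
    HasSignIntervals (2 * n) J h := by
  have hcont {I : Set ℝ} (hI : I ⊆ J) : ContinuousOn h I := fun t ht =>
    (hd t (hI ht)).continuousAt.continuousWithinAt
  have hderiv {I : Set ℝ} (hI : I ⊆ J) (t : ℝ) (ht : t ∈ interior I) :
      HasDerivWithinAt h (h' t) (interior I) t :=
    (hd t (hI (interior_subset ht))).hasDerivWithinAt
  have hanti (I) (hI : I ⊆ {t ∈ J | h' t < 0}) (hIc : I.OrdConnected) : AntitoneOn h I :=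
    antitoneOn_of_hasDerivWithinAt_nonpos hIc.convex (hcont fun t ht => (hI ht).1)
      (hderiv fun t ht => (hI ht).1) fun t ht => (hI (interior_subset ht)).2.le
  have hmono (I) (hI : I ⊆ {t ∈ J | 0 ≤ h' t}) (hIc : I.OrdConnected) : MonotoneOn h I :=
    monotoneOn_of_hasDerivWithinAt_nonneg hIc.convex (hcont fun t ht => (hI ht).1)
      (hderiv fun t ht => (hI ht).1) fun t ht => (hI (interior_subset ht)).2
  have hsplit (p : ℝ → Prop) : {t ∈ J | p t} =
      {t ∈ {t ∈ J | h' t < 0} | p t} ∪ {t ∈ {t ∈ J | 0 ≤ h' t} | p t} := by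
    ext t
    have := lt_or_ge (h' t) 0
    simp only [mem_ofPred_eq, mem_union]
    tauto
  rw [two_mul]
  constructor
  · rw [hsplit fun t => h t < 0]
    exact (H.1.sep fun I hI hIc => ((hanti I hI hIc).convex_lt hIc.convex 0).ordConnected).union
      (H.2.sep fun I hI hIc => ((hmono I hI hIc).convex_lt hIc.convex 0).ordConnected)
  · rw [hsplit fun t => 0 ≤ h t]
    exact (H.1.sep fun I hI hIc => ((hanti I hI hIc).convex_ge hIc.convex 0).ordConnected).union
      (H.2.sep fun I hI hIc => ((hmono I hI hIc).convex_ge hIc.convex 0).ordConnected)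

end HasSignIntervals

/-- The sum of the real power series with coefficients `d`. -/
def powerSum (d : ℕ → ℝ) (t : ℝ) : ℝ := ∑' k, d k * t ^ k

/-- The coefficients of the termwise derivative of the power series with coefficients `d`. -/
def derivCoeff (d : ℕ → ℝ) (k : ℕ) : ℝ := (k + 1) * d (k + 1)

section PowerSum

variable {d : ℕ → ℝ} {B K R t : ℝ}

lemma norm_mul_pow_le (hd : ∀ k, |d k| ≤ B * R ^ k) (k : ℕ) :
    ‖d k * t ^ k‖ ≤ B * (R * |t|) ^ k := by
  rw [norm_mul, norm_pow, mul_pow, ← mul_assoc]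
  exact mul_le_mul_of_nonneg_right (hd k) (by positivity)

lemma summable_mul_pow (hR : 0 ≤ R) (hd : ∀ k, |d k| ≤ B * R ^ k) (ht : R * |t| < 1) :
    Summable fun k => d k * t ^ k :=
  .of_norm_bounded ((summable_geometric_of_lt_one (by positivity) ht).mul_left B)
    (norm_mul_pow_le hd)

lemma abs_powerSum_le (hR : 0 ≤ R) (hd : ∀ k, |d k| ≤ B * R ^ k) (ht : R * |t| < 1) :
    |powerSum d t| ≤ B * (1 - R * |t|)⁻¹ :=
  tsum_of_norm_bounded ((hasSum_geometric_of_lt_one (by positivity) ht).mul_left B)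
    (norm_mul_pow_le hd)

lemma powerSum_eq_add_mul (hR : 0 ≤ R) (hd : ∀ k, |d k| ≤ B * R ^ k) (ht : R * |t| < 1) :
    powerSum d t = d 0 + t * powerSum (fun k => d (k + 1)) t := by
  rw [powerSum, (summable_mul_pow hR hd ht).tsum_eq_zero_add, powerSum, ← tsum_mul_left]
  simp only [pow_zero, mul_one, pow_succ]
  congr! 3
  ring

lemma hasDerivAt_powerSum (hR : 0 ≤ R) (hd : ∀ k, |d k| ≤ B * R ^ k) (ht : R * |t| < 1) :
    HasDerivAt (powerSum d) (powerSum (derivCoeff d) t) t := by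
  obtain ⟨r, htr, hr⟩ : ∃ r, |t| < r ∧ R * r < 1 := by
    have : ∀ᶠ r in 𝓝[>] |t|, R * r < 1 :=
      nhdsWithin_le_nhds ((continuous_const_mul R).continuousAt.eventually_lt_const ht)
    exact (eventually_mem_nhdsWithin.and this).exists
  have hr0 : 0 ≤ r := (abs_nonneg t).trans htr.le
  have hbound (k : ℕ) (y : ℝ) (hy : y ∈ Ioo (-r) r) :
      ‖d k * (k * y ^ (k - 1))‖ ≤ B * R ^ k * (k * r ^ (k - 1)) := by
    rw [norm_mul, norm_mul, norm_pow, RCLike.norm_natCast]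
    have := (abs_lt.2 hy).le
    gcongr
    · exact (abs_nonneg _).trans (hd k)
    · exact hd k
    · exact this
  have hsum : Summable fun k : ℕ => B * R ^ k * (k * r ^ (k - 1)) := by
    rw [← summable_nat_add_iff 1]
    have hRr : ‖R * r‖ < 1 := by rwa [Real.norm_of_nonneg (by positivity)]
    refine (((summable_pow_mul_geometric_of_norm_lt_one 1 hRr).add
      (summable_geometric_of_norm_lt_one hRr)).mul_left (B * R)).congr fun k => ?_
    simp only [Nat.add_sub_cancel]
    push_cast
    ring
  have ht' : t ∈ Ioo (-r) r := abs_lt.1 htr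
  refine (hasDerivAt_tsum_of_isPreconnected hsum isOpen_Ioo isPreconnected_Ioo
    (fun k y _ => (hasDerivAt_pow k y).const_mul (d k)) hbound ht'
    (summable_mul_pow hR hd ht) ht').congr_deriv ?_
  rw [(Summable.of_norm_bounded hsum fun k => hbound k t ht').tsum_eq_zero_add]
  simp [powerSum, derivCoeff, mul_assoc, mul_left_comm]

lemma abs_derivCoeff_le_of_dominated {j : ℕ} (hK : 0 ≤ K) (hR : 0 ≤ R)
    (hd : ∀ k, |d (k + 1)| ≤ K * |d (j + 1)| * R ^ k) (k : ℕ) :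
    |derivCoeff d k| ≤ K * |derivCoeff d j| * (2 * R) ^ k := by
  have habs (i : ℕ) : |derivCoeff d i| = (i + 1) * |d (i + 1)| := by
    rw [derivCoeff, abs_mul, abs_of_nonneg (by positivity)]
  have hle : |d (j + 1)| ≤ |derivCoeff d j| := by
    rw [habs]
    exact le_mul_of_one_le_left (abs_nonneg _) (le_add_of_nonneg_left j.cast_nonneg)
  have h2 : (k : ℝ) + 1 ≤ 2 ^ k := mod_cast k.lt_two_pow_self
  calc |derivCoeff d k| = (k + 1) * |d (k + 1)| := habs k
    _ ≤ 2 ^ k * (K * |derivCoeff d j| * R ^ k) := by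
        gcongr
        exact (hd k).trans (by gcongr)
    _ = K * |derivCoeff d j| * (2 * R) ^ k := by ring

lemma eventually_mul_lt_one (c : ℝ) : ∀ᶠ η in 𝓝[>] (0 : ℝ), c * η < 1 :=
  nhdsWithin_le_nhds <|
    (continuous_const_mul c).continuousAt.eventually_lt_const (by simp)

lemma eventually_hasSignIntervals_of_dominated_zero (hK : 0 ≤ K) (hR : 0 ≤ R) :
    ∀ᶠ η in 𝓝[>] (0 : ℝ), ∀ d : ℕ → ℝ, (∀ k, |d k| ≤ K * |d 0| * R ^ k) →
      HasSignIntervals 1 (Ioo (-η) η) (powerSum d) := by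
  filter_upwards [eventually_mul_lt_one (2 * R), eventually_mul_lt_one (4 * K * R)]
    with η hRη hKη d hd
  have hclose (t) (ht : t ∈ Ioo (-η) η) : |powerSum d t - d 0| ≤ |d 0| / 2 := by
    have htη : |t| < η := abs_lt.2 ht
    have hRt : R * |t| ≤ 1 / 2 := by nlinarith
    have hd' (k : ℕ) : |d (k + 1)| ≤ K * |d 0| * R * R ^ k := by
      simpa only [mul_assoc, pow_succ'] using hd (k + 1)
    have hinv : (1 - R * |t|)⁻¹ ≤ 2 := inv_le_of_inv_le₀ two_pos (by linarith)
    calc |powerSum d t - d 0| = |t| * |powerSum (fun k => d (k + 1)) t| := by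
          rw [powerSum_eq_add_mul hR hd (by linarith), add_sub_cancel_left, abs_mul]
      _ ≤ η * (K * |d 0| * R * 2) := by
          gcongr
          · exact (abs_nonneg t).trans htη.le
          · exact (abs_powerSum_le hR hd' (by linarith)).trans (by gcongr)
      _ = 4 * K * R * η * (|d 0| / 2) := by ring
      _ ≤ |d 0| / 2 := mul_le_of_le_one_left (by positivity) hKη.le
  rcases lt_or_ge (d 0) 0 with h0 | h0
  · refine .of_neg ordConnected_Ioo fun t ht => ?_
    linarith [abs_of_neg h0, (abs_le.1 (hclose t ht)).2]
  · refine .of_nonneg ordConnected_Ioo fun t ht => ?_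
    linarith [abs_of_nonneg h0, (abs_le.1 (hclose t ht)).1]

lemma eventually_hasSignIntervals_of_dominated (j : ℕ) (hK : 0 ≤ K) (hR : 0 ≤ R) :
    ∀ᶠ η in 𝓝[>] (0 : ℝ), ∀ d : ℕ → ℝ, (∀ k, |d k| ≤ K * |d j| * R ^ k) →
      HasSignIntervals (2 ^ j) (Ioo (-η) η) (powerSum d) := by
  induction j generalizing K R with
  | zero => simpa only [pow_zero] using eventually_hasSignIntervals_of_dominated_zero hK hR
  | succ j ih =>
    filter_upwards [ih (K := K * R) (R := 2 * R) (by positivity) (by positivity),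
      eventually_mul_lt_one R] with η hη hRη d hd
    have hd' := abs_derivCoeff_le_of_dominated (K := K * R) (by positivity) hR fun k =>
      (hd (k + 1)).trans_eq (by ring)
    rw [pow_succ']
    refine (hη _ hd').of_hasDerivAt fun t ht => hasDerivAt_powerSum hR hd ?_
    exact (mul_le_mul_of_nonneg_left (abs_lt.2 ht).le hR).trans_lt hRη

end PowerSum

/-- The monomial `x ^ α`. It serves both for evaluating power series and, at the radii of a
polydisc or at natural-number weights of the variables, for weighing multi-indices. -/
def monom {ι R : Type*} [CommMonoid R] (x : ι → R) (α : ι →₀ ℕ) : R := α.prod fun i k => x i ^ k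

section Monom

variable {ι R : Type*}

lemma monom_add [CommMonoid R] (x : ι → R) (α β : ι →₀ ℕ) :
    monom x (α + β) = monom x α * monom x β :=
  Finsupp.prod_add_index' (fun i => pow_zero (x i)) fun i => pow_add (x i)

lemma map_monom {S F : Type*} [CommMonoid R] [CommMonoid S] [FunLike F R S] [MonoidHomClass F R S]
    (φ : F) (x : ι → R) (α : ι →₀ ℕ) : φ (monom x α) = monom (fun i => φ (x i)) α := by
  simp only [monom, map_finsuppProd, map_pow]

lemma monom_mono {x y : ι → NNReal} (h : ∀ i, x i ≤ y i) (α : ι →₀ ℕ) : monom x α ≤ monom y α :=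
  Finset.prod_le_prod (fun _ _ => zero_le) fun i _ => pow_le_pow_left₀ zero_le (h i) _

lemma monom_pos {x : ι → NNReal} (h : ∀ i, 0 < x i) (α : ι →₀ ℕ) : 0 < monom x α :=
  Finset.prod_pos fun i _ => pow_pos (h i) _

lemma norm_monom_le [NormedField R] {x : ι → R} {ρ : ι → NNReal} (h : ∀ i, ‖x i‖₊ ≤ ρ i)
    (α : ι →₀ ℕ) : ‖monom x α‖ ≤ monom ρ α := by
  rw [← coe_nnnorm, NNReal.coe_le_coe, ← nnnormHom_apply, map_monom]
  exact monom_mono h α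

end Monom

section ConvergentSeries

open MvPowerSeries Finset.HasAntidiagonal

variable {ι 𝕜 : Type*} [NormedField 𝕜]

/-- The size `‖c_α‖ ρ ^ α` of the term of `c` with exponent `α` on the polydisc of radius `ρ`. -/
def termNorm (ρ : ι → NNReal) (c : MvPowerSeries ι 𝕜) (α : ι →₀ ℕ) : ℝ :=
  ‖coeff α c‖ * monom ρ α

/-- The weighted `ℓ¹` norm of a power series on the polydisc of radius `ρ`; it is meaningful only
for members of `convergent 𝕜 ρ`. -/
def seriesNorm (ρ : ι → NNReal) (c : MvPowerSeries ι 𝕜) : ℝ := ∑' α, termNorm ρ c α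

/-- The value at `x` of a power series, for `x` in a polydisc where it converges absolutely. -/
def seriesSum (c : MvPowerSeries ι 𝕜) (x : ι → 𝕜) : 𝕜 := ∑' α, coeff α c * monom x α

variable {ρ ρ' : ι → NNReal} {c d : MvPowerSeries ι 𝕜} {x : ι → 𝕜}

lemma termNorm_nonneg (ρ : ι → NNReal) (c : MvPowerSeries ι 𝕜) (α : ι →₀ ℕ) :
    0 ≤ termNorm ρ c α := by
  unfold termNorm
  positivity

lemma seriesNorm_nonneg (ρ : ι → NNReal) (c : MvPowerSeries ι 𝕜) : 0 ≤ seriesNorm ρ c :=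
  tsum_nonneg (termNorm_nonneg ρ c)

lemma termNorm_add_le (ρ : ι → NNReal) (c d : MvPowerSeries ι 𝕜) (α : ι →₀ ℕ) :
    termNorm ρ (c + d) α ≤ termNorm ρ c α + termNorm ρ d α := by
  rw [termNorm, termNorm, termNorm, ← add_mul, map_add]
  gcongr
  exact norm_add_le _ _

lemma termNorm_mul_le [DecidableEq ι] (ρ : ι → NNReal) (c d : MvPowerSeries ι 𝕜) (α : ι →₀ ℕ) :
    termNorm ρ (c * d) α ≤
      ∑ β ∈ antidiagonal α, termNorm ρ c β.1 * termNorm ρ d β.2 := by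
  rw [termNorm, coeff_mul]
  calc ‖∑ β ∈ antidiagonal α, coeff β.1 c * coeff β.2 d‖ * monom ρ α
      ≤ (∑ β ∈ antidiagonal α, ‖coeff β.1 c * coeff β.2 d‖) * monom ρ α := by
        gcongr
        exact norm_sum_le _ _
    _ = ∑ β ∈ antidiagonal α, termNorm ρ c β.1 * termNorm ρ d β.2 := by
        rw [Finset.sum_mul]
        refine Finset.sum_congr rfl fun β hβ => ?_
        rw [← mem_antidiagonal.1 hβ, monom_add, NNReal.coe_mul, norm_mul, termNorm, termNorm]
        ring

lemma termNorm_monomial_of_ne {α β : ι →₀ ℕ} (h : β ≠ α) (a : 𝕜) :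
    termNorm ρ (monomial α a) β = 0 := by
  rw [termNorm, coeff_monomial_ne h, norm_zero, zero_mul]

lemma termNorm_monomial_self (α : ι →₀ ℕ) (a : 𝕜) :
    termNorm ρ (monomial α a) α = ‖a‖ * monom ρ α := by
  rw [termNorm, coeff_monomial_same]

lemma summable_termNorm_monomial (α : ι →₀ ℕ) (a : 𝕜) : Summable (termNorm ρ (monomial α a)) :=
  (hasSum_single α fun _ h => termNorm_monomial_of_ne h a).summable

lemma summable_termNorm_mul (hc : Summable (termNorm ρ c)) (hd : Summable (termNorm ρ d)) :
    Summable (termNorm ρ (c * d)) := by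
  classical
  exact (summable_sum_mul_antidiagonal_of_summable_mul (hc.mul_of_nonneg hd
    (termNorm_nonneg ρ c) (termNorm_nonneg ρ d))).of_nonneg_of_le
      (termNorm_nonneg ρ _) (termNorm_mul_le ρ c d)

variable (𝕜 ρ) in
/-- The algebra of power series that converge absolutely on the closed polydisc of radius `ρ`. -/
def convergent : Subalgebra 𝕜 (MvPowerSeries ι 𝕜) where
  carrier := {c | Summable (termNorm ρ c)}
  mul_mem' := summable_termNorm_mul
  add_mem' hc hd := (hc.add hd).of_nonneg_of_le (termNorm_nonneg ρ _) (termNorm_add_le ρ _ _)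
  algebraMap_mem' := summable_termNorm_monomial 0

lemma monomial_mem_convergent (α : ι →₀ ℕ) (a : 𝕜) : monomial α a ∈ convergent 𝕜 ρ :=
  summable_termNorm_monomial α a

lemma termNorm_mono (h : ∀ i, ρ i ≤ ρ' i) (c : MvPowerSeries ι 𝕜) (α : ι →₀ ℕ) :
    termNorm ρ c α ≤ termNorm ρ' c α :=
  mul_le_mul_of_nonneg_left (mod_cast monom_mono h α) (norm_nonneg _)

lemma convergent_anti (h : ∀ i, ρ i ≤ ρ' i) : convergent 𝕜 ρ' ≤ convergent 𝕜 ρ := fun c hc =>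
  Summable.of_nonneg_of_le (termNorm_nonneg ρ c) (termNorm_mono h c) hc

lemma seriesNorm_add_le (hc : c ∈ convergent 𝕜 ρ) (hd : d ∈ convergent 𝕜 ρ) :
    seriesNorm ρ (c + d) ≤ seriesNorm ρ c + seriesNorm ρ d :=
  ((add_mem hc hd).tsum_le_tsum (termNorm_add_le ρ c d) (Summable.add hc hd)).trans_eq
    (Summable.tsum_add hc hd)

lemma seriesNorm_mul_le (hc : c ∈ convergent 𝕜 ρ) (hd : d ∈ convergent 𝕜 ρ) :
    seriesNorm ρ (c * d) ≤ seriesNorm ρ c * seriesNorm ρ d := by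
  classical
  have hcd := hc.mul_of_nonneg hd (termNorm_nonneg ρ c) (termNorm_nonneg ρ d)
  rw [seriesNorm, seriesNorm, seriesNorm, hc.tsum_mul_tsum_eq_tsum_sum_antidiagonal hd hcd]
  exact (mul_mem hc hd).tsum_le_tsum (termNorm_mul_le ρ c d)
    (summable_sum_mul_antidiagonal_of_summable_mul hcd)

lemma seriesNorm_monomial (α : ι →₀ ℕ) (a : 𝕜) :
    seriesNorm ρ (monomial α a) = ‖a‖ * monom ρ α := by
  rw [seriesNorm, tsum_eq_single α fun _ h => termNorm_monomial_of_ne h a, termNorm_monomial_self]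

lemma seriesNorm_sub_monomial (hc : c ∈ convergent 𝕜 ρ) (α : ι →₀ ℕ) :
    seriesNorm ρ (c - monomial α (coeff α c)) = seriesNorm ρ c - termNorm ρ c α := by
  classical
  rw [seriesNorm, seriesNorm, Summable.tsum_eq_add_tsum_ite hc α, add_sub_cancel_left]
  refine tsum_congr fun β => ?_
  rcases eq_or_ne β α with rfl | h
  · simp [termNorm]
  · simp [termNorm, coeff_monomial_ne h, h]

lemma norm_coeff_mul_monom_le (hx : ∀ i, ‖x i‖₊ ≤ ρ i) (c : MvPowerSeries ι 𝕜) (α : ι →₀ ℕ) :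
    ‖coeff α c * monom x α‖ ≤ termNorm ρ c α := by
  rw [norm_mul]
  exact mul_le_mul_of_nonneg_left (norm_monom_le hx α) (norm_nonneg _)

lemma summable_norm_coeff_mul_monom (hc : c ∈ convergent 𝕜 ρ) (hx : ∀ i, ‖x i‖₊ ≤ ρ i) :
    Summable fun α => ‖coeff α c * monom x α‖ :=
  .of_nonneg_of_le (fun _ => norm_nonneg _) (norm_coeff_mul_monom_le hx c) hc

lemma norm_seriesSum_le (hc : c ∈ convergent 𝕜 ρ) (hx : ∀ i, ‖x i‖₊ ≤ ρ i) :
    ‖seriesSum c x‖ ≤ seriesNorm ρ c :=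
  tsum_of_norm_bounded (Summable.hasSum hc) (norm_coeff_mul_monom_le hx c)

variable [CompleteSpace 𝕜]

lemma seriesSum_add (hc : c ∈ convergent 𝕜 ρ) (hd : d ∈ convergent 𝕜 ρ)
    (hx : ∀ i, ‖x i‖₊ ≤ ρ i) : seriesSum (c + d) x = seriesSum c x + seriesSum d x := by
  simp only [seriesSum, map_add, add_mul]
  exact (summable_norm_coeff_mul_monom hc hx).of_norm.tsum_add
    (summable_norm_coeff_mul_monom hd hx).of_norm

lemma seriesSum_mul (hc : c ∈ convergent 𝕜 ρ) (hd : d ∈ convergent 𝕜 ρ)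
    (hx : ∀ i, ‖x i‖₊ ≤ ρ i) : seriesSum (c * d) x = seriesSum c x * seriesSum d x := by
  classical
  have hc' := summable_norm_coeff_mul_monom hc hx
  have hd' := summable_norm_coeff_mul_monom hd hx
  have hcd : Summable fun β : (ι →₀ ℕ) × (ι →₀ ℕ) =>
      (coeff β.1 c * monom x β.1) * (coeff β.2 d * monom x β.2) :=
    (hc'.mul_norm hd').of_norm
  refine .trans (tsum_congr fun α => ?_)
    (hc'.of_norm.tsum_mul_tsum_eq_tsum_sum_antidiagonal hd'.of_norm hcd).symm
  rw [coeff_mul, Finset.sum_mul]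
  refine Finset.sum_congr rfl fun β hβ => ?_
  rw [← mem_antidiagonal.1 hβ, monom_add]
  ring

end ConvergentSeries

section Weights

open MvPowerSeries

variable {ι : Type*}

lemma exists_injective_monom (ι : Type*) [Countable ι] :
    ∃ w : ι → ℕ, Function.Injective (monom w) := by
  obtain ⟨e, he⟩ := exists_injective_nat ι
  let p : ι ↪ ℕ := ⟨fun i => Nat.nth Nat.Prime (e i),
    (Nat.nth_injective Nat.infinite_setOfPred_prime).comp he⟩
  refine ⟨p, fun α β h => Finsupp.embDomain_injective p ?_⟩
  have hfact (α : ι →₀ ℕ) : (monom p α).factorization = α.embDomain p := by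
    rw [monom, ← Finsupp.prod_embDomain (f := p) (g := fun i k => i ^ k)]
    refine Nat.prod_pow_factorization_eq_self fun n hn => ?_
    obtain ⟨i, -, rfl⟩ := Finset.mem_map.1 (Finsupp.support_embDomain p α ▸ hn)
    exact Nat.prime_nth_prime (e i)
  rw [← hfact α, h, hfact β]

/-- The polyradius attached to the weights `w` and the exponent `σ`, for which the monomial with
exponent `α` has size `(monom w α) ^ (-σ)`. -/
def weightRadius (w : ι → ℕ) (σ : ℕ) (i : ι) : NNReal := ((w i : NNReal) ^ σ)⁻¹

variable {w : ι → ℕ} (hw : Function.Injective (monom w))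

include hw

lemma two_le_of_injective_monom (i : ι) : 2 ≤ w i := by
  have hne {k l : ℕ} (hkl : k ≠ l) : w i ^ k ≠ w i ^ l := fun h =>
    hkl (Finsupp.single_injective i (hw (by simpa [monom] using h)))
  by_contra! hlt
  interval_cases w i
  · exact hne (by decide : 1 ≠ 2) (by simp)
  · exact hne zero_ne_one (by simp)

lemma monom_weight_pos (α : ι →₀ ℕ) : 0 < monom w α :=
  Finset.prod_pos fun i _ => pow_pos (two_pos.trans_le (two_le_of_injective_monom hw i)) _

lemma weightRadius_pos (σ : ℕ) (i : ι) : 0 < weightRadius w σ i := by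
  have := two_le_of_injective_monom hw i
  unfold weightRadius
  positivity

lemma weightRadius_anti {σ τ : ℕ} (h : σ ≤ τ) (i : ι) :
    weightRadius w τ i ≤ weightRadius w σ i := by
  have := two_le_of_injective_monom hw i
  unfold weightRadius
  gcongr
  exact mod_cast one_le_two.trans this

lemma exists_weightRadius_le [Finite ι] {ρ : ι → NNReal} (hρ : ∀ i, 0 < ρ i) :
    ∃ σ, ∀ i, weightRadius w σ i ≤ ρ i := by
  refine (eventually_all.2 fun i => ?_ : ∀ᶠ σ in atTop, ∀ i, weightRadius w σ i ≤ ρ i).exists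
  have hlt : (w i : NNReal)⁻¹ < 1 :=
    inv_lt_one_of_one_lt₀ (mod_cast two_le_of_injective_monom hw i)
  filter_upwards [(tendsto_pow_atTop_nhds_zero_of_lt_one zero_le hlt).eventually_le_const (hρ i)]
    with σ hσ
  rwa [weightRadius, ← inv_pow]

omit hw

variable {𝕜 : Type*} [NormedField 𝕜] {c d : MvPowerSeries ι 𝕜} {σ M : ℕ}

lemma termNorm_weightRadius (σ : ℕ) (c : MvPowerSeries ι 𝕜) (α : ι →₀ ℕ) :
    termNorm (weightRadius w σ) c α = ‖coeff α c‖ * (((monom w α : ℕ) : ℝ) ^ σ)⁻¹ := by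
  have h : monom (weightRadius w σ) α = (((monom w α : ℕ) : NNReal) ^ σ)⁻¹ := by
    simp only [monom, weightRadius, Finsupp.prod, Nat.cast_prod, Nat.cast_pow, ← Finset.prod_pow,
      ← Finset.prod_inv_distrib, inv_pow, ← pow_mul, mul_comm]
  rw [termNorm, h]
  push_cast
  rfl

lemma termNorm_weightRadius_add (σ τ : ℕ) (c : MvPowerSeries ι 𝕜) (α : ι →₀ ℕ) :
    termNorm (weightRadius w (σ + τ)) c α =
      (((monom w α : ℕ) : ℝ) ^ τ)⁻¹ * termNorm (weightRadius w σ) c α := by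
  rw [termNorm_weightRadius, termNorm_weightRadius, pow_add, mul_inv]
  ring

/-- The terms of `c` of weight less than `M` are zero. -/
def VanishesBelow (w : ι → ℕ) (M : ℕ) (c : MvPowerSeries ι 𝕜) : Prop :=
  ∀ α, monom w α < M → coeff α c = 0

namespace VanishesBelow

lemma sub (hc : VanishesBelow w M c) (hd : VanishesBelow w M d) : VanishesBelow w M (c - d) :=
  fun α hα => by rw [map_sub, hc α hα, hd α hα, sub_zero]

lemma monomial_mul (hc : VanishesBelow w M c) (δ : ι →₀ ℕ) (a : 𝕜) :
    VanishesBelow w (monom w δ * M) (monomial δ a * c) := by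
  classical
  intro α hα
  rw [coeff_monomial_mul]
  split_ifs with hδ
  · rw [← add_tsub_cancel_of_le hδ, monom_add] at hα
    rw [hc _ (lt_of_mul_lt_mul_left' hα), mul_zero]
  · rfl

lemma succ (hc : VanishesBelow w M c) (h : ∀ α, monom w α = M → coeff α c = 0) :
    VanishesBelow w (M + 1) c := fun α hα =>
  (Nat.lt_succ_iff_lt_or_eq.1 hα).elim (hc α) (h α)

lemma seriesNorm_le (hc : VanishesBelow w M c) (hM : 0 < M)
    (hcσ : c ∈ convergent 𝕜 (weightRadius w σ)) (τ : ℕ) :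
    seriesNorm (weightRadius w (σ + τ)) c ≤
      ((M : ℝ) ^ τ)⁻¹ * seriesNorm (weightRadius w σ) c := by
  have hterm (α : ι →₀ ℕ) : termNorm (weightRadius w (σ + τ)) c α ≤
      ((M : ℝ) ^ τ)⁻¹ * termNorm (weightRadius w σ) c α := by
    rcases lt_or_ge (monom w α) M with h | h
    · simp [termNorm, hc α h]
    · rw [termNorm_weightRadius_add]
      gcongr
      exact termNorm_nonneg _ c α
  have hsum : Summable fun α => ((M : ℝ) ^ τ)⁻¹ * termNorm (weightRadius w σ) c α :=
    Summable.mul_left _ hcσ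
  exact ((hsum.of_nonneg_of_le (termNorm_nonneg _ c) hterm).tsum_le_tsum hterm hsum).trans_eq
    tsum_mul_left

end VanishesBelow

/-- The exponent `α` is the least one, in the order defined by the weights `w`, that occurs in
`c`. -/
def IsLeadingExponent (w : ι → ℕ) (c : MvPowerSeries ι 𝕜) (α : ι →₀ ℕ) : Prop :=
  coeff α c ≠ 0 ∧ VanishesBelow w (monom w α) c

lemma VanishesBelow.succ_of_coeff_eq_zero (hw : Function.Injective (monom w)) {α : ι →₀ ℕ}
    (hc : VanishesBelow w (monom w α) c) (h : coeff α c = 0) :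
    VanishesBelow w (monom w α + 1) c :=
  hc.succ fun β hβ => by rwa [hw hβ]

lemma IsLeadingExponent.termNorm_pos (hw : Function.Injective (monom w)) {α : ι →₀ ℕ}
    (hα : IsLeadingExponent w c α) (σ : ℕ) : 0 < termNorm (weightRadius w σ) c α :=
  mul_pos (norm_pos_iff.2 hα.1) (mod_cast monom_pos (weightRadius_pos hw σ) α)

lemma IsLeadingExponent.eventually_seriesNorm_le (hw : Function.Injective (monom w))
    {α : ι →₀ ℕ} (hα : IsLeadingExponent w c α) (hc : c ∈ convergent 𝕜 (weightRadius w σ)) :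
    ∀ᶠ τ in atTop, seriesNorm (weightRadius w τ) c ≤
      3 / 2 * termNorm (weightRadius w τ) c α := by
  set m := monom w α
  set r := c - monomial α (coeff α c)
  have hm0 : 0 < m := monom_weight_pos hw α
  have hr_mem : r ∈ convergent 𝕜 (weightRadius w σ) := sub_mem hc (monomial_mem_convergent _ _)
  have hrv : VanishesBelow w (m + 1) r := by
    refine (hα.2.sub fun β hβ => coeff_monomial_ne (ne_of_apply_ne _ hβ.ne) _).succ_of_coeff_eq_zero
      hw ?_
    rw [map_sub, coeff_monomial_same, sub_self]
  have hterm := hα.termNorm_pos hw σ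
  have hlt : (m : ℝ) / (m + 1) < 1 := (div_lt_one (by positivity)).2 (lt_add_one _)
  have hlim := (tendsto_pow_atTop_nhds_zero_of_lt_one (by positivity) hlt).mul_const
    (seriesNorm (weightRadius w σ) r)
  rw [zero_mul] at hlim
  rw [← map_add_atTop_eq_nat σ, eventually_map]
  filter_upwards [hlim.eventually_le_const (half_pos hterm)] with τ hτ
  rw [add_comm τ σ]
  have hsplit := seriesNorm_sub_monomial
    (convergent_anti (weightRadius_anti hw (σ.le_add_right τ)) hc) α
  have hrest : seriesNorm (weightRadius w (σ + τ)) r ≤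
      termNorm (weightRadius w (σ + τ)) c α / 2 :=
    calc seriesNorm (weightRadius w (σ + τ)) r
        ≤ (((m + 1 : ℕ) : ℝ) ^ τ)⁻¹ * seriesNorm (weightRadius w σ) r :=
          hrv.seriesNorm_le m.succ_pos hr_mem τ
      _ = ((m : ℝ) ^ τ)⁻¹ * (((m : ℝ) / (m + 1)) ^ τ * seriesNorm (weightRadius w σ) r) := by
          rw [Nat.cast_succ, div_pow]
          field_simp
      _ ≤ ((m : ℝ) ^ τ)⁻¹ * (termNorm (weightRadius w σ) c α / 2) := by gcongr
      _ = termNorm (weightRadius w (σ + τ)) c α / 2 := by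
          rw [termNorm_weightRadius_add, mul_div_assoc]
  linarith

end Weights

section StandardBasis

open MvPowerSeries

variable {ι 𝕜 : Type*} [NormedField 𝕜] {w : ι → ℕ} {ρ : ι → NNReal} {σ : ℕ}

/-- The series `f γ`, for `γ` in the set `G` of exponents, form a standard basis of the ideal `I`
for the monomial order of the weights `w`, and the leading term of each of them makes up at least
two thirds of its norm for the polyradius `weightRadius w σ`. -/
structure IsStandardBasis (w : ι → ℕ) (σ : ℕ) (I : Ideal (convergent 𝕜 ρ))
    (G : Set (ι →₀ ℕ)) (f : (ι →₀ ℕ) → convergent 𝕜 ρ) : Prop where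
  mem : ∀ γ ∈ G, f γ ∈ I
  isLeadingExponent : ∀ γ ∈ G, IsLeadingExponent w (f γ).1 γ
  seriesNorm_le : ∀ γ ∈ G, seriesNorm (weightRadius w σ) (f γ).1 ≤
    3 / 2 * termNorm (weightRadius w σ) (f γ).1 γ
  exists_le : ∀ h ∈ I, ∀ α, IsLeadingExponent w h.1 α → ∃ γ ∈ G, γ ≤ α

/-- Dickson's lemma. -/
lemma exists_finite_forall_exists_le [Finite ι] (S : Set (ι →₀ ℕ)) :
    ∃ G ⊆ S, G.Finite ∧ ∀ α ∈ S, ∃ γ ∈ G, γ ≤ α :=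
  ⟨{γ | Minimal (· ∈ S) γ}, fun _ hγ => hγ.prop,
    WellQuasiOrderedLE.finite_of_isAntichain (setOfPred_minimal_antichain _),
    fun α hα => (exists_minimal_le_of_wellFoundedLT (· ∈ S) α hα).imp fun _ h => ⟨h.2, h.1⟩⟩

lemma exists_isStandardBasis [Finite ι] (hw : Function.Injective (monom w))
    (hρ : ∀ i, 0 < ρ i) (I : Ideal (convergent 𝕜 ρ)) :
    ∃ G f, G.Finite ∧ ∀ᶠ σ in atTop, IsStandardBasis w σ I G f := by
  obtain ⟨σ₀, hσ₀⟩ := exists_weightRadius_le hw hρ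
  obtain ⟨G, hGI, hG, hle⟩ :=
    exists_finite_forall_exists_le {γ | ∃ h ∈ I, IsLeadingExponent w h.1 γ}
  have (γ : ι →₀ ℕ) : ∃ h, γ ∈ G → h ∈ I ∧ IsLeadingExponent w h.1 γ := by
    by_cases hγ : γ ∈ G
    · exact (hGI hγ).imp fun h hh _ => hh
    · exact ⟨0, fun h => absurd h hγ⟩
  choose f hf using this
  refine ⟨G, f, hG, ?_⟩
  filter_upwards [(eventually_all_finite hG).2 fun γ hγ =>
    (hf γ hγ).2.eventually_seriesNorm_le hw (convergent_anti hσ₀ (f γ).2)] with σ hσ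
  exact ⟨fun γ hγ => (hf γ hγ).1, fun γ hγ => (hf γ hγ).2, hσ, fun h hh α hα => hle α ⟨h, hh, hα⟩⟩

/-- The multiple of `f` whose term with exponent `δ + γ` is that of `h`, when `f` has a nonzero term
with exponent `γ`; subtracting it from `h` is one step of the division. -/
def leadingQuotient (h f : MvPowerSeries ι 𝕜) (δ γ : ι →₀ ℕ) : MvPowerSeries ι 𝕜 :=
  monomial δ (coeff (δ + γ) h / coeff γ f)

variable {f h : MvPowerSeries ι 𝕜} {γ δ : ι →₀ ℕ}

lemma seriesNorm_leadingQuotient_mul (hγ : coeff γ f ≠ 0) :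
    seriesNorm ρ (leadingQuotient h f δ γ) * termNorm ρ f γ = termNorm ρ h (δ + γ) := by
  rw [leadingQuotient, seriesNorm_monomial, termNorm, termNorm, monom_add, norm_div, NNReal.coe_mul]
  field_simp [norm_ne_zero_iff.2 hγ]

lemma VanishesBelow.sub_leadingQuotient_mul (hw : Function.Injective (monom w))
    (hf : IsLeadingExponent w f γ) (hh : VanishesBelow w (monom w (δ + γ)) h) :
    VanishesBelow w (monom w (δ + γ) + 1) (h - leadingQuotient h f δ γ * f) := by
  have hmul := hf.2.monomial_mul δ (coeff (δ + γ) h / coeff γ f)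
  rw [← monom_add] at hmul
  refine (hh.sub hmul).succ_of_coeff_eq_zero hw ?_
  rw [map_sub, coeff_add_monomial_mul, div_mul_cancel₀ _ hf.1, sub_self]

lemma seriesNorm_sub_leadingQuotient_mul_le (hf : f ∈ convergent 𝕜 ρ) (hh : h ∈ convergent 𝕜 ρ)
    (hγ : coeff γ f ≠ 0) (hdom : seriesNorm ρ f ≤ 3 / 2 * termNorm ρ f γ) :
    seriesNorm ρ (h - leadingQuotient h f δ γ * f) ≤
      seriesNorm ρ h - 1 / 2 * termNorm ρ h (δ + γ) := by
  set q := leadingQuotient h f δ γ with hq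
  have hq_mem : q ∈ convergent 𝕜 ρ := monomial_mem_convergent _ _
  set f' := f - monomial γ (coeff γ f)
  have hf' : f' ∈ convergent 𝕜 ρ := sub_mem hf (monomial_mem_convergent _ _)
  set h' := h - monomial (δ + γ) (coeff (δ + γ) h)
  have hh' : h' ∈ convergent 𝕜 ρ := sub_mem hh (monomial_mem_convergent _ _)
  have hcancel : h - q * f = h' + (-q) * f' := by
    have : q * monomial γ (coeff γ f) = monomial (δ + γ) (coeff (δ + γ) h) := by
      rw [hq, leadingQuotient, monomial_mul_monomial, div_mul_cancel₀ _ hγ]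
    rw [neg_mul, mul_sub, this]
    ring
  have hneg : seriesNorm ρ (-q) = seriesNorm ρ q := by
    rw [hq, leadingQuotient, ← map_neg, seriesNorm_monomial, seriesNorm_monomial, norm_neg]
  calc seriesNorm ρ (h - q * f) = seriesNorm ρ (h' + (-q) * f') := by rw [hcancel]
    _ ≤ seriesNorm ρ h' + seriesNorm ρ (-q) * seriesNorm ρ f' :=
        (seriesNorm_add_le hh' (mul_mem (neg_mem hq_mem) hf')).trans <| by
          gcongr
          exact seriesNorm_mul_le (neg_mem hq_mem) hf'
    _ ≤ (seriesNorm ρ h - termNorm ρ h (δ + γ)) +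
          seriesNorm ρ q * (1 / 2 * termNorm ρ f γ) := by
        rw [seriesNorm_sub_monomial hh, hneg, seriesNorm_sub_monomial hf]
        gcongr
        · exact seriesNorm_nonneg ρ q
        · linarith
    _ = seriesNorm ρ h - 1 / 2 * termNorm ρ h (δ + γ) := by
        rw [← seriesNorm_leadingQuotient_mul (h := h) (δ := δ) hγ]
        ring

lemma norm_seriesSum_le_add_of_leadingQuotient [CompleteSpace 𝕜] {x : ι → 𝕜} {B : ℝ}
    (hf : f ∈ convergent 𝕜 ρ) (hh : h ∈ convergent 𝕜 ρ) (hx : ∀ i, ‖x i‖₊ ≤ ρ i)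
    (hγ : coeff γ f ≠ 0) (hfx : ‖seriesSum f x‖ ≤ B * termNorm ρ f γ) :
    ‖seriesSum h x‖ ≤
      ‖seriesSum (h - leadingQuotient h f δ γ * f) x‖ + B * termNorm ρ h (δ + γ) := by
  set q := leadingQuotient h f δ γ
  have hq : q ∈ convergent 𝕜 ρ := monomial_mem_convergent _ _
  have hqf : q * f ∈ convergent 𝕜 ρ := mul_mem hq hf
  calc ‖seriesSum h x‖ = ‖seriesSum (h - q * f) x + seriesSum q x * seriesSum f x‖ := by
        rw [← seriesSum_mul hq hf hx, ← seriesSum_add (sub_mem hh hqf) hqf hx, sub_add_cancel]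
    _ ≤ ‖seriesSum (h - q * f) x‖ + ‖seriesSum q x‖ * ‖seriesSum f x‖ :=
        (norm_add_le _ _).trans_eq (by rw [norm_mul])
    _ ≤ ‖seriesSum (h - q * f) x‖ + seriesNorm ρ q * (B * termNorm ρ f γ) := by
        gcongr
        · exact seriesNorm_nonneg ρ q
        · exact norm_seriesSum_le hq hx
    _ = ‖seriesSum (h - q * f) x‖ + B * termNorm ρ h (δ + γ) := by
        rw [← seriesNorm_leadingQuotient_mul (h := h) (δ := δ) hγ]
        ring

namespace IsStandardBasis

variable [CompleteSpace 𝕜] {I : Ideal (convergent 𝕜 ρ)} {G : Set (ι →₀ ℕ)}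
  {f : (ι →₀ ℕ) → convergent 𝕜 ρ} {h : convergent 𝕜 ρ} {x : ι → 𝕜} {B : ℝ} {M : ℕ}

lemma exists_vanishesBelow_succ (hS : IsStandardBasis w σ I G f)
    (hw : Function.Injective (monom w)) (hσ : ∀ i, weightRadius w σ i ≤ ρ i)
    (hx : ∀ i, ‖x i‖₊ ≤ weightRadius w σ i) (hB : 0 ≤ B)
    (hfx : ∀ γ ∈ G, ‖seriesSum (f γ).1 x‖ ≤ B * termNorm (weightRadius w σ) (f γ).1 γ)
    (hh : h ∈ I) (hM : VanishesBelow w M h.1) :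
    ∃ h' ∈ I, VanishesBelow w (M + 1) h'.1 ∧
      seriesNorm (weightRadius w σ) h'.1 ≤ seriesNorm (weightRadius w σ) h.1 ∧
      ‖seriesSum h.1 x‖ + 2 * B * seriesNorm (weightRadius w σ) h'.1 ≤
        ‖seriesSum h'.1 x‖ + 2 * B * seriesNorm (weightRadius w σ) h.1 := by
  by_cases hα : ∃ α, monom w α = M ∧ coeff α h.1 ≠ 0
  swap
  · push Not at hα
    exact ⟨h, hh, hM.succ hα, le_rfl, le_rfl⟩
  obtain ⟨α, rfl, hα⟩ := hα
  obtain ⟨γ, hγ, hγα⟩ := hS.exists_le h hh α ⟨hα, hM⟩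
  obtain ⟨δ, rfl⟩ := exists_add_of_le hγα
  rw [add_comm γ δ] at hα hM ⊢
  have hlead := hS.isLeadingExponent γ hγ
  have hmem (c : convergent 𝕜 ρ) : c.1 ∈ convergent 𝕜 (weightRadius w σ) :=
    convergent_anti hσ c.2
  let q : convergent 𝕜 ρ := ⟨leadingQuotient h.1 (f γ).1 δ γ, monomial_mem_convergent _ _⟩
  have hnorm : seriesNorm (weightRadius w σ) (h - q * f γ).1 ≤
      seriesNorm (weightRadius w σ) h.1 - 1 / 2 * termNorm (weightRadius w σ) h.1 (δ + γ) :=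
    seriesNorm_sub_leadingQuotient_mul_le (hmem _) (hmem _) hlead.1 (hS.seriesNorm_le γ hγ)
  have hterm := termNorm_nonneg (weightRadius w σ) h.1 (δ + γ)
  refine ⟨h - q * f γ, sub_mem hh (I.mul_mem_left q (hS.mem γ hγ)),
    hM.sub_leadingQuotient_mul hw hlead, by linarith, ?_⟩
  have hvalue : ‖seriesSum h.1 x‖ ≤ ‖seriesSum (h - q * f γ).1 x‖ +
      B * termNorm (weightRadius w σ) h.1 (δ + γ) :=
    norm_seriesSum_le_add_of_leadingQuotient (hmem _) (hmem _) hx hlead.1 (hfx γ hγ)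
  linarith [mul_le_mul_of_nonneg_left hnorm (by positivity : 0 ≤ 2 * B)]

lemma exists_vanishesBelow (hS : IsStandardBasis w σ I G f)
    (hw : Function.Injective (monom w)) (hσ : ∀ i, weightRadius w σ i ≤ ρ i)
    (hx : ∀ i, ‖x i‖₊ ≤ weightRadius w σ i) (hB : 0 ≤ B)
    (hfx : ∀ γ ∈ G, ‖seriesSum (f γ).1 x‖ ≤ B * termNorm (weightRadius w σ) (f γ).1 γ)
    (hh : h ∈ I) (M : ℕ) :
    ∃ h' ∈ I, VanishesBelow w M h'.1 ∧
      seriesNorm (weightRadius w σ) h'.1 ≤ seriesNorm (weightRadius w σ) h.1 ∧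
      ‖seriesSum h.1 x‖ + 2 * B * seriesNorm (weightRadius w σ) h'.1 ≤
        ‖seriesSum h'.1 x‖ + 2 * B * seriesNorm (weightRadius w σ) h.1 := by
  induction M with
  | zero => exact ⟨h, hh, fun α hα => absurd hα (Nat.not_lt_zero _), le_rfl, le_rfl⟩
  | succ M ih =>
    obtain ⟨h', hh', hM, hle, hsum⟩ := ih
    obtain ⟨h'', hh'', hM', hle', hsum'⟩ :=
      hS.exists_vanishesBelow_succ hw hσ hx hB hfx hh' hM
    exact ⟨h'', hh'', hM', hle'.trans hle, by linarith⟩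

theorem norm_seriesSum_le_of_mem (hS : IsStandardBasis w σ I G f)
    (hw : Function.Injective (monom w)) (hσ : ∀ i, weightRadius w σ i ≤ ρ i)
    (hx : ∀ i, ‖x i‖₊ ≤ weightRadius w (σ + 1) i) (hB : 0 ≤ B)
    (hfx : ∀ γ ∈ G, ‖seriesSum (f γ).1 x‖ ≤ B * termNorm (weightRadius w σ) (f γ).1 γ)
    (hh : h ∈ I) : ‖seriesSum h.1 x‖ ≤ 2 * B * seriesNorm (weightRadius w σ) h.1 := by
  have hx' (i : ι) : ‖x i‖₊ ≤ weightRadius w σ i :=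
    (hx i).trans (weightRadius_anti hw σ.le_succ i)
  have hbound (M : ℕ) : ‖seriesSum h.1 x‖ ≤
      1 / ((M : ℝ) + 1) * seriesNorm (weightRadius w σ) h.1 +
        2 * B * seriesNorm (weightRadius w σ) h.1 := by
    obtain ⟨h', -, hM, hle, hsum⟩ :=
      hS.exists_vanishesBelow hw hσ hx' hB hfx hh (M + 1)
    have hmem := convergent_anti hσ h'.2
    have hrest : ‖seriesSum h'.1 x‖ ≤
        1 / ((M : ℝ) + 1) * seriesNorm (weightRadius w σ) h.1 :=
      calc ‖seriesSum h'.1 x‖ ≤ seriesNorm (weightRadius w (σ + 1)) h'.1 :=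
            norm_seriesSum_le (convergent_anti (weightRadius_anti hw σ.le_succ) hmem) hx
        _ ≤ (((M + 1 : ℕ) : ℝ) ^ 1)⁻¹ * seriesNorm (weightRadius w σ) h'.1 :=
            hM.seriesNorm_le M.succ_pos hmem 1
        _ ≤ 1 / ((M : ℝ) + 1) * seriesNorm (weightRadius w σ) h.1 := by
            rw [pow_one, one_div, Nat.cast_succ]
            gcongr
    have : 0 ≤ 2 * B * seriesNorm (weightRadius w σ) h'.1 :=
      mul_nonneg (by positivity) (seriesNorm_nonneg _ _)
    linarith
  have hlim := (tendsto_one_div_add_atTop_nhds_zero_nat (𝕜 := ℝ)).mul_const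
    (seriesNorm (weightRadius w σ) h.1)
  refine ge_of_tendsto' (hlim.add_const _) hbound |>.trans_eq ?_
  rw [zero_mul, zero_add]

end IsStandardBasis

end StandardBasis

section Domination

open Asymptotics

variable {ι 𝕜 : Type*} [NormedField 𝕜] {ρ ρ' : ι → NNReal}

lemma seriesNorm_mono (h : ∀ i, ρ i ≤ ρ' i) {c : MvPowerSeries ι 𝕜} (hc : c ∈ convergent 𝕜 ρ') :
    seriesNorm ρ c ≤ seriesNorm ρ' c :=
  (convergent_anti h hc).tsum_le_tsum (termNorm_mono h c) hc

lemma eventually_nnnorm_le [Finite ι] (hρ : ∀ i, 0 < ρ i) :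
    ∀ᶠ x in 𝓝 (0 : ι → 𝕜), ∀ i, ‖x i‖₊ ≤ ρ i :=
  eventually_all.2 fun i =>
    (continuous_apply i).nnnorm.continuousAt.eventually_le_const (by simpa using hρ i)

variable [CompleteSpace 𝕜] [Finite ι]

lemma eventually_isBigO_of_mem_span (hρ : ∀ i, 0 < ρ i) {a : ℕ → convergent 𝕜 ρ}
    {h : convergent 𝕜 ρ} (hh : h ∈ Ideal.span (range a)) :
    ∀ᶠ N in atTop, seriesSum h.1 =O[𝓝 0]
      fun x => ∑ k ∈ Finset.range (N + 1), ‖seriesSum (a k).1 x‖ := by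
  induction hh using Submodule.span_induction with
  | mem h hh =>
    obtain ⟨k, rfl⟩ := hh
    filter_upwards [eventually_ge_atTop k] with N hN
    refine .of_norm_le fun x => Finset.single_le_sum (f := fun k => ‖seriesSum (a k).1 x‖)
      (fun _ _ => norm_nonneg _) (Finset.mem_range_succ_iff.2 hN)
  | zero =>
    refine .of_forall fun N => (isBigO_zero _ _).congr_left fun x => ?_
    simp [seriesSum]
  | add g h _ _ hg hh =>
    filter_upwards [hg, hh] with N hg hh
    refine (hg.add hh).congr' ?_ .rfl
    filter_upwards [eventually_nnnorm_le hρ] with x hx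
    exact (seriesSum_add g.2 h.2 hx).symm
  | smul q h _ hh =>
    filter_upwards [hh] with N hh
    have hq : seriesSum q.1 =O[𝓝 0] fun _ => (1 : ℝ) := .of_bound (seriesNorm ρ q.1) <| by
      filter_upwards [eventually_nnnorm_le hρ] with x hx
      simpa using norm_seriesSum_le q.2 hx
    refine (hq.mul hh).congr' ?_ (.of_forall fun x => one_mul _)
    filter_upwards [eventually_nnnorm_le hρ] with x hx
    exact (seriesSum_mul q.2 h.2 hx).symm

lemma exists_seriesSum_le_sum (hρ : ∀ i, 0 < ρ i) (a : ℕ → convergent 𝕜 ρ) :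
    ∃ C : ℝ, 0 ≤ C ∧ ∃ N, ∀ᶠ x in 𝓝 (0 : ι → 𝕜), ∀ k, ‖seriesSum (a k).1 x‖ ≤
      C * (∑ j ∈ Finset.range (N + 1), ‖seriesSum (a j).1 x‖) * seriesNorm ρ (a k).1 := by
  obtain ⟨w, hw⟩ := exists_injective_monom ι
  obtain ⟨σ₀, hσ₀⟩ := exists_weightRadius_le hw hρ
  obtain ⟨G, f, hG, hS⟩ := exists_isStandardBasis hw hρ (Ideal.span (range a))
  obtain ⟨σ, hS, hσσ₀⟩ := (hS.and (eventually_ge_atTop σ₀)).exists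
  have hσ (i : ι) : weightRadius w σ i ≤ ρ i := (weightRadius_anti hw hσσ₀ i).trans (hσ₀ i)
  obtain ⟨N, hN⟩ := ((eventually_all_finite hG).2 fun γ hγ =>
    eventually_isBigO_of_mem_span hρ (hS.mem γ hγ)).exists
  have hbound : ∀ᶠ C : ℝ in atTop, ∀ γ ∈ G, ∀ᶠ x in 𝓝 0, ‖seriesSum (f γ).1 x‖ ≤
      C * (∑ j ∈ Finset.range (N + 1), ‖seriesSum (a j).1 x‖) *
        termNorm (weightRadius w σ) (f γ).1 γ := by
    refine (eventually_all_finite hG).2 fun γ hγ => ?_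
    have hpos := (hS.isLeadingExponent γ hγ).termNorm_pos hw σ
    refine (isBigO_iff_eventually.1 ((hN γ hγ).const_mul_right hpos.ne')).mono fun C hC =>
      hC.mono fun x hx => hx.trans_eq ?_
    rw [Real.norm_of_nonneg (by positivity), mul_comm (termNorm _ _ _), mul_assoc]
  obtain ⟨C, hC, hC0⟩ := (hbound.and (eventually_ge_atTop 0)).exists
  refine ⟨2 * C, by positivity, N, ?_⟩
  filter_upwards [eventually_nnnorm_le (weightRadius_pos hw (σ + 1)),
    (eventually_all_finite hG).2 hC] with x hx hfx k
  calc ‖seriesSum (a k).1 x‖ ≤ 2 * (C * ∑ j ∈ Finset.range (N + 1), ‖seriesSum (a j).1 x‖) *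
        seriesNorm (weightRadius w σ) (a k).1 :=
        hS.norm_seriesSum_le_of_mem hw hσ hx (by positivity) hfx
          (Ideal.subset_span (mem_range_self k))
    _ ≤ 2 * (C * ∑ j ∈ Finset.range (N + 1), ‖seriesSum (a j).1 x‖) * seriesNorm ρ (a k).1 := by
        gcongr
        exact seriesNorm_mono hσ (a k).2
    _ = _ := by ring

theorem exists_dominating_index (hρ : ∀ i, 0 < ρ i) (a : ℕ → convergent 𝕜 ρ) :
    ∃ C : ℝ, 0 ≤ C ∧ ∃ N, ∀ᶠ x in 𝓝 (0 : ι → 𝕜), ∃ j ≤ N, ∀ k,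
      ‖seriesSum (a k).1 x‖ ≤ C * ‖seriesSum (a j).1 x‖ * seriesNorm ρ (a k).1 := by
  obtain ⟨C, hC, N, h⟩ := exists_seriesSum_le_sum hρ a
  refine ⟨C * (N + 1), by positivity, N, h.mono fun x hx => ?_⟩
  obtain ⟨j, hj, hmax⟩ := Finset.exists_max_image (Finset.range (N + 1))
    (fun j => ‖seriesSum (a j).1 x‖) ⟨0, by simp⟩
  refine ⟨j, Finset.mem_range_succ_iff.1 hj, fun k => (hx k).trans ?_⟩
  have hsum := Finset.sum_le_card_nsmul _ _ _ hmax
  rw [Finset.card_range, nsmul_eq_mul, Nat.cast_succ] at hsum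
  rw [mul_assoc C (N + 1 : ℝ)]
  gcongr
  exact seriesNorm_nonneg ρ (a k).1

end Domination

section Expansion

open MvPowerSeries

variable {ι 𝕜 : Type*}

lemma monom_sum_single {R κ : Type*} [CommMonoid R] [Fintype κ] (x : ι → R) (φ : κ → ι) :
    monom x (∑ j, Finsupp.single (φ j) 1) = ∏ j, x (φ j) := by
  rw [monom, ← Finsupp.prod_finsetSum_index (fun i => pow_zero (x i)) fun i => pow_add (x i)]
  simp

lemma tsum_fiber_mul {α κ R : Type*} [DivisionRing R] [TopologicalSpace R] [IsTopologicalRing R]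
    [T2Space R] (g : κ → R) (m : α → R) (e : κ → α) (a : α) :
    ∑' w : e ⁻¹' {a}, g w * m (e w) = (∑' w : e ⁻¹' {a}, g w) * m a := by
  rw [← tsum_mul_right]
  exact tsum_congr fun w => by rw [w.2]

lemma exists_hasSum_seriesSum [NormedField 𝕜] [CompleteSpace 𝕜] {κ : Type*} {ρ : ι → NNReal}
    (hρ : ∀ i, 0 < ρ i) (q : κ → 𝕜) (e : κ → ι →₀ ℕ)
    (hq : Summable fun w => ‖q w‖ * monom ρ (e w)) :
    ∃ c ∈ convergent 𝕜 ρ, ∀ x : ι → 𝕜, (∀ i, ‖x i‖₊ ≤ ρ i) →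
      HasSum (fun w => q w * monom x (e w)) (seriesSum c x) := by
  obtain ⟨c, hc⟩ : ∃ c : MvPowerSeries ι 𝕜, ∀ α, coeff α c = ∑' w : e ⁻¹' {α}, q w :=
    ⟨fun α => ∑' w : e ⁻¹' {α}, q w, fun _ => rfl⟩
  have hfiber (α : ι →₀ ℕ) : Summable fun w : e ⁻¹' {α} => ‖q w‖ := by
    rw [← summable_mul_right_iff (NNReal.coe_ne_zero.2 (monom_pos hρ α).ne')]
    refine (hq.subtype (e ⁻¹' {α})).congr fun w => ?_
    rw [Function.comp_apply, show e w.1 = α from w.2]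
  refine ⟨c, ?_, fun x hx => ?_⟩
  · refine .of_nonneg_of_le (termNorm_nonneg ρ c) (fun α => ?_)
      (hq.hasSum.tsum_fiberwise e).summable
    rw [termNorm, hc, tsum_fiber_mul (fun w => ‖q w‖) fun α => ((monom ρ α : NNReal) : ℝ)]
    exact mul_le_mul_of_nonneg_right (norm_tsum_le_tsum_norm (hfiber α)) (by positivity)
  · have hsum : Summable fun w => q w * monom x (e w) := .of_norm_bounded hq fun w => by
      rw [norm_mul]
      exact mul_le_mul_of_nonneg_left (norm_monom_le hx _) (norm_nonneg _)
    convert hsum.hasSum using 1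
    rw [← (hsum.hasSum.tsum_fiberwise e).tsum_eq]
    exact tsum_congr fun α => by rw [tsum_fiber_mul q (monom x), hc]

variable [NontriviallyNormedField 𝕜] [Fintype ι]

section Words

variable [DecidableEq ι]

lemma apply_eq_sum_mul_prod {n : ℕ} (g : ContinuousMultilinearMap 𝕜 (fun _ : Fin n => ι → 𝕜) 𝕜)
    (x : ι → 𝕜) :
    g (fun _ => x) = ∑ φ : Fin n → ι, g (fun j => Pi.single (φ j) 1) * ∏ j, x (φ j) := by
  conv_lhs => rw [pi_eq_sum_univ' x]
  rw [ContinuousMultilinearMap.map_sum]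
  refine Finset.sum_congr rfl fun φ _ => ?_
  rw [ContinuousMultilinearMap.map_smul_univ, smul_eq_mul, mul_comm]

lemma norm_apply_single_le {n : ℕ}
    (g : ContinuousMultilinearMap 𝕜 (fun _ : Fin n => ι → 𝕜) 𝕜) (φ : Fin n → ι) :
    ‖g fun j => Pi.single (φ j) 1‖ ≤ ‖g‖ :=
  g.unit_le_opNorm ((pi_norm_le_iff_of_nonneg zero_le_one).2 fun j => by simp [Pi.norm_single])

lemma summable_norm_apply_single_mul (p : FormalMultilinearSeries 𝕜 (ι → 𝕜) 𝕜) {δ : NNReal}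
    (hδ : (Fintype.card ι * δ : NNReal) < p.radius) :
    Summable fun w : Σ n, Fin n → ι => ‖p w.1 fun j => Pi.single (w.2 j) 1‖ * δ ^ w.1 := by
  have hwords : Summable fun w : Σ n, Fin n → ι => ‖p w.1‖ * δ ^ w.1 := by
    rw [summable_sigma_of_nonneg fun w => by positivity]
    refine ⟨fun n => (hasSum_fintype _).summable, (p.summable_norm_mul_pow hδ).congr fun n => ?_⟩
    calc ‖p n‖ * (Fintype.card ι * δ : NNReal) ^ n = ∑ _φ : Fin n → ι, ‖p n‖ * δ ^ n := by
          simp [mul_pow, mul_left_comm]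
      _ = _ := (tsum_fintype _).symm
  exact hwords.of_nonneg_of_le (fun w => by positivity) fun w =>
    mul_le_mul_of_nonneg_right (norm_apply_single_le (p w.1) w.2) (by positivity)

end Words

theorem exists_eventuallyEq_seriesSum [CompleteSpace 𝕜] {f : (ι → 𝕜) → 𝕜}
    (hf : AnalyticAt 𝕜 f 0) :
    ∃ ρ : ι → NNReal, (∀ i, 0 < ρ i) ∧ ∃ c ∈ convergent 𝕜 ρ, f =ᶠ[𝓝 0] seriesSum c := by
  classical
  obtain ⟨p, hp⟩ := hf
  obtain ⟨r, hr0, hr⟩ := ENNReal.lt_iff_exists_nnreal_btwn.1 hp.radius_pos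
  obtain ⟨δ, hδ0, hδ⟩ : ∃ δ : NNReal, 0 < δ ∧ Fintype.card ι * δ ≤ r := by
    refine ⟨r / (Fintype.card ι + 1), div_pos (mod_cast hr0) (by positivity), ?_⟩
    rw [mul_div_assoc', div_le_iff₀ (by positivity), mul_comm]
    gcongr
    exact le_self_add
  have hsumm := summable_norm_apply_single_mul p ((ENNReal.coe_le_coe.2 hδ).trans_lt hr)
  obtain ⟨c, hc, hsum⟩ := exists_hasSum_seriesSum (fun _ => hδ0)
    (fun w : Σ n, Fin n → ι => p w.1 fun j => Pi.single (w.2 j) 1)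
    (fun w => ∑ j, Finsupp.single (w.2 j) 1) (by simpa [monom_sum_single] using hsumm)
  refine ⟨fun _ => δ, fun _ => hδ0, c, hc, ?_⟩
  filter_upwards [hp.eventually_hasSum, eventually_nnnorm_le fun _ => hδ0] with x hfx hx
  rw [zero_add] at hfx
  refine hfx.unique (((hsum x hx).sigma fun n => hasSum_fintype _).congr_fun fun n => ?_)
  simp only [monom_sum_single, apply_eq_sum_mul_prod]

end Expansion

section Slices

open MvPowerSeries

variable {ι 𝕜 : Type*}

lemma monom_optionElim {R : Type*} [CommMonoid R] (x : Option ι → R) (k : ℕ) (α : ι →₀ ℕ) :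
    monom x (α.optionElim k) = x none ^ k * monom (x ∘ some) α := by
  rw [monom, Finsupp.prod_option_index _ _ (fun i => pow_zero (x i)) fun i => pow_add (x i),
    Finsupp.optionElim_apply_none, Finsupp.some_optionElim]
  rfl

variable [NormedField 𝕜] {ρ : Option ι → NNReal} {c : MvPowerSeries (Option ι) 𝕜}
  {x : Option ι → 𝕜}

/-- The coefficient of `t ^ k` in `c`, where `t` is the variable with index `none`; it is a power
series in the remaining variables. -/
def slice (c : MvPowerSeries (Option ι) 𝕜) (k : ℕ) : MvPowerSeries ι 𝕜 :=
  PowerSeries.coeff k (optionEquivLeft ι 𝕜 c)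

lemma coeff_slice (c : MvPowerSeries (Option ι) 𝕜) (k : ℕ) (α : ι →₀ ℕ) :
    coeff α (slice c k) = coeff (α.optionElim k) c :=
  coeff_coeff_optionEquivLeft c k α

lemma termNorm_optionElim (ρ : Option ι → NNReal) (c : MvPowerSeries (Option ι) 𝕜) (k : ℕ)
    (α : ι →₀ ℕ) :
    termNorm ρ c (α.optionElim k) = ρ none ^ k * termNorm (ρ ∘ some) (slice c k) α := by
  rw [termNorm, termNorm, coeff_slice, monom_optionElim]
  push_cast
  ring

lemma summable_termNorm_optionElim (hc : c ∈ convergent 𝕜 ρ) :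
    Summable fun β : ℕ × (ι →₀ ℕ) => termNorm ρ c (β.2.optionElim β.1) :=
  (Finsupp.optionEquiv.symm.summable_iff (f := termNorm ρ c)).2 hc

lemma slice_mem_convergent (hρ : 0 < ρ none) (hc : c ∈ convergent 𝕜 ρ) (k : ℕ) :
    slice c k ∈ convergent 𝕜 (ρ ∘ some) := by
  have := (summable_termNorm_optionElim hc).prod_factor k
  simp only [termNorm_optionElim] at this
  exact (summable_mul_left_iff (by positivity)).1 this

lemma pow_mul_seriesNorm_slice_le (hc : c ∈ convergent 𝕜 ρ) (k : ℕ) :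
    ρ none ^ k * seriesNorm (ρ ∘ some) (slice c k) ≤ seriesNorm ρ c := by
  rw [seriesNorm, ← tsum_mul_left]
  simp only [← termNorm_optionElim]
  exact tsum_comp_le_tsum_of_inj hc (termNorm_nonneg ρ c)
    (Finsupp.optionEquiv.symm.injective.comp (Prod.mk_right_injective k))

lemma seriesSum_eq_tsum_slice [CompleteSpace 𝕜] (hc : c ∈ convergent 𝕜 ρ)
    (hx : ∀ i, ‖x i‖₊ ≤ ρ i) :
    seriesSum c x = ∑' k, seriesSum (slice c k) (x ∘ some) * x none ^ k := by
  have hsum := Finsupp.optionEquiv.symm.summable_iff.2 (summable_norm_coeff_mul_monom hc hx).of_norm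
  calc seriesSum c x = ∑' β : ℕ × (ι →₀ ℕ), coeff (β.2.optionElim β.1) c *
        monom x (β.2.optionElim β.1) := (Finsupp.optionEquiv.symm.tsum_eq _).symm
    _ = ∑' k, ∑' α : ι →₀ ℕ, coeff (α.optionElim k) c * monom x (α.optionElim k) :=
        hsum.tsum_prod
    _ = ∑' k, seriesSum (slice c k) (x ∘ some) * x none ^ k := tsum_congr fun k => by
        rw [seriesSum, ← tsum_mul_right]
        simp only [coeff_slice, monom_optionElim, mul_assoc, mul_comm]

lemma seriesNorm_slice_le (hρ : 0 < ρ none) (hc : c ∈ convergent 𝕜 ρ) (k : ℕ) :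
    seriesNorm (ρ ∘ some) (slice c k) ≤ seriesNorm ρ c * ((ρ none : ℝ)⁻¹) ^ k := by
  rw [inv_pow, ← div_eq_mul_inv, le_div_iff₀ (by positivity), mul_comm]
  exact pow_mul_seriesNorm_slice_le hc k

end Slices

section Fibers

lemma eventually_forall_mem_Ioo {p : ℝ → Prop} (h : ∀ᶠ t in 𝓝 0, p t) :
    ∀ᶠ η in 𝓝[>] (0 : ℝ), ∀ t ∈ Ioo (-η) η, p t := by
  obtain ⟨ε, hε, hp⟩ := Metric.eventually_nhds_iff.1 h
  filter_upwards [Ioo_mem_nhdsGT hε] with η hη t ht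
  exact hp (by simpa using (abs_lt.2 ht).trans hη.2)

lemma eventually_prod_forall_mem_Ioo {E : Type*} [TopologicalSpace E] {a : E} {p : E × ℝ → Prop}
    (h : ∀ᶠ z in 𝓝 (a, 0), p z) :
    ∀ᶠ q : E × ℝ in 𝓝 a ×ˢ 𝓝[>] 0, ∀ t ∈ Ioo (-q.2) q.2, p (q.1, t) := by
  rw [nhds_prod_eq] at h
  obtain ⟨pa, ha, pb, hb, hp⟩ := eventually_prod_iff.1 h
  filter_upwards [ha.prod_mk (eventually_forall_mem_Ioo hb)] with q hq t ht
  exact hp hq.1 (hq.2 t ht)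

lemma tendsto_optionElim {ι X : Type*} [TopologicalSpace X] [Zero X] :
    Tendsto (fun z : (ι → X) × X => fun o : Option ι => o.elim z.2 z.1) (𝓝 (0, 0)) (𝓝 0) :=
  (continuous_pi (Option.rec continuous_snd fun i =>
    (continuous_apply i).comp continuous_fst)).tendsto' _ _ (funext (Option.rec rfl fun _ => rfl))

variable {ι : Type*} {ρ : Option ι → NNReal} {c : MvPowerSeries (Option ι) ℝ}

lemma abs_seriesSum_slice_le (hρ : 0 < ρ none) (hc : c ∈ convergent ℝ ρ) {x : ι → ℝ}
    (hx : ∀ i, ‖x i‖₊ ≤ ρ (some i)) (k : ℕ) :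
    |seriesSum (slice c k) x| ≤ seriesNorm ρ c * ((ρ none : ℝ)⁻¹) ^ k :=
  (norm_seriesSum_le (slice_mem_convergent hρ hc k) hx).trans (seriesNorm_slice_le hρ hc k)

variable [Finite ι]

lemma exists_eventually_eq_seriesSum {E : Type*} [NormedAddCommGroup E] [NormedSpace ℝ E]
    (L : E ≃L[ℝ] (ι → ℝ)) {f : E × ℝ → ℝ} (hf : AnalyticAt ℝ f 0) :
    ∃ ρ : Option ι → NNReal, (∀ i, 0 < ρ i) ∧ ∃ c ∈ convergent ℝ ρ,
      ∀ᶠ z : E × ℝ in 𝓝 (0, 0), f z = seriesSum c fun o => o.elim z.2 (L z.1) := by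
  cases nonempty_fintype ι
  let P : (Option ι → ℝ) →L[ℝ] E × ℝ :=
    (L.symm.toContinuousLinearMap.comp (.pi fun i => .proj (some i))).prod (.proj none)
  obtain ⟨ρ, hρ, c, hc, hfc⟩ := exists_eventuallyEq_seriesSum
    (hf.comp_of_eq (P.analyticAt 0) (map_zero P))
  refine ⟨ρ, hρ, c, hc, ?_⟩
  have hL : Tendsto (fun z : E × ℝ => (L z.1, z.2)) (𝓝 (0, 0)) (𝓝 (0, 0)) :=
    ((L.continuous.comp continuous_fst).prodMk continuous_snd).tendsto' _ _ (by simp)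
  filter_upwards [(tendsto_optionElim.comp hL).eventually hfc] with z hz
  have hP : P (fun o => o.elim z.2 (L z.1)) = z := by simp [P]
  simpa [hP] using hz

lemma eventually_hasDerivAt_seriesSum (hρ : ∀ i, 0 < ρ i) (hc : c ∈ convergent ℝ ρ) :
    ∀ᶠ q : (ι → ℝ) × ℝ in 𝓝 0 ×ˢ 𝓝[>] 0, ∀ t ∈ Ioo (-q.2) q.2,
      HasDerivAt (fun t => seriesSum c fun o => o.elim t q.1)
        (powerSum (derivCoeff fun k => seriesSum (slice c k) q.1) t) t := by
  have hpoly : ∀ᶠ z : (ι → ℝ) × ℝ in 𝓝 (0, 0), ∀ o : Option ι, ‖o.elim z.2 z.1‖₊ ≤ ρ o :=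
    tendsto_optionElim.eventually (eventually_nnnorm_le hρ)
  filter_upwards [eventually_prod_forall_mem_Ioo hpoly,
    (eventually_nnnorm_le fun i => hρ (some i)).prod_inl _,
    (eventually_mul_lt_one (ρ none : ℝ)⁻¹).prod_inr _] with q hpoly hx hη t ht
  have ht' : (ρ none : ℝ)⁻¹ * |t| < 1 :=
    (mul_le_mul_of_nonneg_left (abs_lt.2 ht).le (by positivity)).trans_lt hη
  refine (hasDerivAt_powerSum (by positivity) (abs_seriesSum_slice_le (hρ none) hc hx)
    ht').congr_of_eventuallyEq ?_
  filter_upwards [isOpen_Ioo.mem_nhds ht] with u hu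
  exact seriesSum_eq_tsum_slice hc (hpoly u hu)

theorem exists_eventually_hasSignIntervals_seriesSum (hρ : ∀ i, 0 < ρ i)
    (hc : c ∈ convergent ℝ ρ) :
    ∃ p, ∀ᶠ q : (ι → ℝ) × ℝ in 𝓝 0 ×ˢ 𝓝[>] 0, ∀ s,
      HasSignIntervals p (Ioo (-q.2) q.2) fun t => (seriesSum c fun o => o.elim t q.1) - s := by
  obtain ⟨C, hC, N, hdom⟩ := exists_dominating_index (fun i => hρ (some i)) fun k =>
    ⟨slice c (k + 1), slice_mem_convergent (hρ none) hc _⟩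
  set R : ℝ := (ρ none : ℝ)⁻¹
  set K : ℝ := C * seriesNorm ρ c * R
  have hR : 0 ≤ R := by positivity
  have hK : 0 ≤ K := mul_nonneg (mul_nonneg hC (seriesNorm_nonneg ρ c)) hR
  have hsign : ∀ᶠ η in 𝓝[>] (0 : ℝ), ∀ j ∈ Finset.range (N + 1), ∀ d : ℕ → ℝ,
      (∀ k, |d k| ≤ K * |d j| * (2 * R) ^ k) → HasSignIntervals (2 ^ j) (Ioo (-η) η) (powerSum d) :=
    (eventually_all_finset _).2 fun j _ =>
      eventually_hasSignIntervals_of_dominated j hK (by positivity)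
  refine ⟨2 * 2 ^ N, ?_⟩
  filter_upwards [hdom.prod_inl _, hsign.prod_inr _, eventually_hasDerivAt_seriesSum hρ hc]
    with q hdom hsign hderiv s
  obtain ⟨j, hj, hdom⟩ := hdom
  have hd (k : ℕ) : |seriesSum (slice c (k + 1)) q.1| ≤
      K * |seriesSum (slice c (j + 1)) q.1| * R ^ k := by
    calc |seriesSum (slice c (k + 1)) q.1| ≤ C * |seriesSum (slice c (j + 1)) q.1| *
        seriesNorm (ρ ∘ some) (slice c (k + 1)) := hdom k
      _ ≤ C * |seriesSum (slice c (j + 1)) q.1| * (seriesNorm ρ c * R ^ (k + 1)) := by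
        gcongr
        exact seriesNorm_slice_le (hρ none) hc _
      _ = K * |seriesSum (slice c (j + 1)) q.1| * R ^ k := by ring
  refine .of_hasDerivAt (fun t ht => (hderiv t ht).sub_const s) <|
    (hsign j (Finset.mem_range_succ_iff.2 hj) _ ?_).mono (Nat.pow_le_pow_right two_pos hj)
  exact abs_derivCoeff_le_of_dominated hK hR hd

theorem exists_eventually_isUnionOfIntervals {E : Type*} [NormedAddCommGroup E] [NormedSpace ℝ E]
    [FiniteDimensional ℝ E] {f : E × ℝ → ℝ} (hf : AnalyticAt ℝ f 0) :
    ∃ p, ∀ᶠ q : E × ℝ in 𝓝 0 ×ˢ 𝓝[>] 0, ∀ s,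
      IsUnionOfIntervals p {t ∈ Ioo (-q.2) q.2 | f (q.1, t) < s} := by
  have L : E ≃L[ℝ] (Fin (Module.finrank ℝ E) → ℝ) := .ofFinrankEq (by simp)
  obtain ⟨ρ, hρ, c, hc, hfc⟩ := exists_eventually_eq_seriesSum L hf
  obtain ⟨p, hp⟩ := exists_eventually_hasSignIntervals_seriesSum hρ hc
  have hL : Tendsto L (𝓝 0) (𝓝 0) := L.continuous.tendsto' _ _ (map_zero L)
  refine ⟨p, ?_⟩
  filter_upwards [(hL.prodMap tendsto_id).eventually hp, eventually_prod_forall_mem_Ioo hfc]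
    with q hp hfc s
  convert (hp s).1 using 1
  exact sep_ext_iff.2 fun t ht => by simp [hfc t ht]

lemma exists_pos_forall_mem_ball {E : Type*} [PseudoMetricSpace E] {a : E} {p : E × ℝ → Prop}
    (h : ∀ᶠ q in 𝓝 a ×ˢ 𝓝[>] 0, p q) : ∃ η > 0, ∀ x ∈ Metric.ball a η, p (x, η) := by
  obtain ⟨⟨ε, δ⟩, ⟨hε, hδ⟩, hp⟩ :=
    (Metric.nhds_basis_ball.prod (nhdsGT_basis (0 : ℝ))).eventually_iff.1 h
  obtain ⟨η, hη, hηεδ⟩ := exists_between (lt_min hε hδ)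
  obtain ⟨hηε, hηδ⟩ := lt_min_iff.1 hηεδ
  exact ⟨η, hη, fun x hx => hp ⟨Metric.ball_subset_ball hηε.le hx, hη, hηδ⟩⟩

end Fibers

theorem stmt5_general {E ι : Type*} [NormedAddCommGroup E] [NormedSpace ℝ E]
    [FiniteDimensional ℝ E] [Finite ι] {f : ι → E × ℝ → ℝ} (hf : ∀ i, AnalyticAt ℝ (f i) 0) :
    ∃ η > (0 : ℝ), ∃ p : ℕ, 0 < p ∧ ∀ (s : ι → ℝ), ∀ x ∈ Metric.ball (0 : E) η,
      IsUnionOfIntervals p {t : ℝ | |t| < η ∧ ∀ i, f i (x, t) < s i} := by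
  cases nonempty_fintype ι
  choose p hp using fun i => exists_eventually_isUnionOfIntervals (hf i)
  obtain ⟨η, hη, h⟩ := exists_pos_forall_mem_ball (eventually_all.2 hp)
  refine ⟨η, hη, ∏ i, p i + 1, Nat.succ_pos _, fun s x hx => ?_⟩
  have hinter := IsUnionOfIntervals.iInter fun i => h x hx i (s i)
  convert (hinter.sep (p := (· ∈ Ioo (-η) η)) fun I _ hI => hI.inter ordConnected_Ioo).mono
    (Nat.le_succ _) using 1
  ext t
  simp only [mem_ofPred_eq, mem_iInter, abs_lt, ← mem_Ioo]
  exact ⟨fun h => ⟨fun i => ⟨h.1, h.2 i⟩, h.1⟩, fun h => ⟨h.2, fun i => (h.1 i).2⟩⟩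

end

/-- **Corollary 2.1.2.** Let `f 1, ..., f l` be real analytic on a neighborhood `U` of the
origin of `ℝⁿ = ℝ^{n-1} × ℝ` (with `m = n - 1`), none identically zero near the origin. Then
there are `η > 0` and a positive integer `p` such that for every choice of reals `s i` and
every `x'` in the `(n-1)`-dimensional ball `B(0,η)`, the set
`{xₙ : |xₙ| < η and f i (x', xₙ) < s i for each i}` is a union of at most `p` intervals
(i.e. of `p` order-connected subsets of `ℝ`, some possibly empty). -/
theorem stmt5 (m l : ℕ) (f : Fin l → (EuclideanSpace ℝ (Fin m) × ℝ → ℝ))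
    (U : Set (EuclideanSpace ℝ (Fin m) × ℝ))
    (hU : U ∈ nhds (0 : EuclideanSpace ℝ (Fin m) × ℝ))
    (hf : ∀ i, AnalyticOnNhd ℝ (f i) U)
    (hnz : ∀ i, ¬ ∀ᶠ x in nhds (0 : EuclideanSpace ℝ (Fin m) × ℝ), f i x = 0) :
    ∃ η > (0 : ℝ), ∃ p : ℕ, 0 < p ∧
      ∀ (s : Fin l → ℝ), ∀ x' ∈ Metric.ball (0 : EuclideanSpace ℝ (Fin m)) η,
        ∃ I : Fin p → Set ℝ, (∀ j, (I j).OrdConnected) ∧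
          {t : ℝ | |t| < η ∧ ∀ i, f i (x', t) < s i} = ⋃ j, I j :=
  stmt5_general fun i => hf i 0 (mem_of_mem_nhds hU)
end
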